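/- arXiv:math-ph/0609026 — 2 statements merged into one kernel-verified Lean document; each statement's English description precedes it below -/
import Mathlib

section
/- For every ξ ∈ ℝ, the second eigenvalue of the Neumann realization of -d²/dt² + (t-ξ)² on ℝ₊ is strictly greater than the first eigenvalue of the Dirichlet realization of the same operator on ℝ₊: λ₂^N(ξ) > λ₁^D(ξ). -/
open MeasureTheory Set Filter Topology

noncomputable section

/-- `B¹(ℝ₊)`-type regularity on the half line (smooth core):
`u`, `u'` and `t·u` are square integrable on `(0,∞)`. -/
def MemB1p (u : ℝ → ℝ) : Prop :=
  Differentiable ℝ u ∧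
  IntegrableOn (fun t => (u t)^2) (Ioi 0) ∧
  IntegrableOn (fun t => (deriv u t)^2) (Ioi 0) ∧
  IntegrableOn (fun t => t^2 * (u t)^2) (Ioi 0)

/-- The Robin quadratic form `q[γ,ξ]` of `-d²/dt² + (t-ξ)²` on `ℝ₊`. -/
def qRobin (γ ξ : ℝ) (u : ℝ → ℝ) : ℝ :=
  (∫ t in Ioi (0:ℝ), ((deriv u t)^2 + (t - ξ)^2 * (u t)^2)) + γ * (u 0)^2

/-- squared `L²(ℝ₊)` norm. -/
def np (u : ℝ → ℝ) : ℝ := ∫ t in Ioi (0:ℝ), (u t)^2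

/-- Lowest Robin eigenvalue `λ₁(γ,ξ)`, defined variationally. -/
def lambda1 (γ ξ : ℝ) : ℝ :=
  sInf {r : ℝ | ∃ u : ℝ → ℝ, MemB1p u ∧ np u ≠ 0 ∧ r = qRobin γ ξ u / np u}

/-- Lowest Neumann eigenvalue `λ₁^N(ξ)` (Robin with `γ = 0`). -/
def lambda1N (ξ : ℝ) : ℝ := lambda1 0 ξ

/-- Lowest Dirichlet eigenvalue `λ₁^D(ξ)`, defined variationally. -/
def lambda1D (ξ : ℝ) : ℝ :=
  sInf {r : ℝ | ∃ u : ℝ → ℝ, MemB1p u ∧ u 0 = 0 ∧ np u ≠ 0 ∧ r = qRobin 0 ξ u / np u}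

/-- The de Gennes constant `Θ₀ = inf_ξ λ₁^N(ξ)`. -/
def Theta0 : ℝ := sInf (Set.range lambda1N)

/-- `B¹(ℝ)`-type regularity on the whole line (smooth core). -/
def MemB1 (u : ℝ → ℝ) : Prop :=
  Differentiable ℝ u ∧
  Integrable (fun t => (u t)^2) ∧
  Integrable (fun t => (deriv u t)^2) ∧
  Integrable (fun t => t^2 * (u t)^2)

/-- The interface quadratic form `Q[a,m,α;ξ]` on `B¹(ℝ)`. -/
def QI (a m α ξ : ℝ) (u : ℝ → ℝ) : ℝ :=
  (∫ t in Ioi (0:ℝ), ((deriv u t)^2 + (t - ξ)^2 * (u t)^2 - α * (u t)^2)) +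
  ∫ t in Iio (0:ℝ), ((1/m) * ((deriv u t)^2 + (t - ξ)^2 * (u t)^2) + a * α * (u t)^2)

/-- squared `L²(ℝ)` norm. -/
def nR (u : ℝ → ℝ) : ℝ := ∫ t, (u t)^2

/-- Ground state energy `μ₁(a,m,α;ξ)` of the interface operator, defined variationally. -/
def mu1 (a m α ξ : ℝ) : ℝ :=
  sInf {r : ℝ | ∃ u : ℝ → ℝ, MemB1 u ∧ nR u ≠ 0 ∧ r = QI a m α ξ u / nR u}

/-- `λ` is a Neumann eigenvalue of `-d²/dt² + (t-ξ)²` on `ℝ₊`. -/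
def IsNeumannEigenvalue (ξ lam : ℝ) : Prop :=
  ∃ u : ℝ → ℝ, MemB1p u ∧ np u ≠ 0 ∧ deriv u 0 = 0 ∧
    ∀ t : ℝ, 0 < t → HasDerivAt (deriv u) (((t - ξ)^2 - lam) * u t) t

/-- The second Neumann eigenvalue: the smallest Neumann eigenvalue above `λ₁^N(ξ)`. -/
def lambda2N (ξ : ℝ) : ℝ :=
  sInf {lam : ℝ | IsNeumannEigenvalue ξ lam ∧ lambda1N ξ < lam}

/-!
Write `λ = 2 ν + 1` and `ψ_ν(x) = exp (-x² / 2) H_ν(x)`. Up to a factor, `ψ_ν(t - ξ)` is the only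
square integrable solution of `-u'' + (t - ξ)² u = λ u` on `ℝ₊`, so `λ` is a Neumann eigenvalue iff
`ψ_ν'(-ξ) = 0`. The recurrence in `ν` forces `H_{ν + k}(-ξ)` to change sign for arbitrarily large
`k`; let `ν₀` be the least `ν` with `H_ν(-ξ) = 0`. The test function `ψ_{ν₀}(t - ξ)` shows that
`2 ν₀ + 1` bounds both lowest eigenvalues from above.

For `ν < ν₀` the function `ψ_ν(t - ξ)` is positive on `ℝ₊`, and by Picone's identity a positive
Neumann eigenfunction is a ground state. Hence every Neumann eigenvalue above `λ₁^N(ξ)` is at least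
`2 ν₀ + 1`, and it differs from `2 ν₀ + 1` because `ψ_{ν₀}` has a simple zero at `-ξ`. Closedness of
the set of Neumann eigenvalues makes the inequality strict for their infimum. The infimum is not
over the empty set: by the same oscillation, `ψ_ν'(-ξ)` vanishes for some `ν > ν₀`.
-/

/-! ### Recurrences, half-line limits and second-order equations -/

lemma frequently_nonpos_of_recurrence {h B : ℕ → ℝ} {A : ℝ} (hB : ∀ᶠ k in atTop, A ^ 2 < B k)
    (hrec : ∀ k, h (k + 2) = A * h (k + 1) - B k * h k) : ∃ᶠ k in atTop, h k ≤ 0 := by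
  intro hpos
  obtain ⟨k, hk⟩ := eventually_atTop.1 (hpos.and hB)
  have hh (j : ℕ) : 0 < h (k + j) := not_le.1 (hk (k + j) (by lia)).1
  have hB (j : ℕ) : A ^ 2 < B (k + j) := (hk (k + j) (by lia)).2
  have h₂ : h (k + 2) < A * h (k + 1) := by
    have : 0 < B k * h k := mul_pos ((sq_nonneg A).trans_lt (hB 0)) (hh 0)
    linarith [hrec k]
  have hA : 0 < A := pos_of_mul_pos_left ((hh 2).trans h₂) (hh 1).le
  have h₃ : h (k + 3) < 0 := calc
    h (k + 3) = A * h (k + 2) - B (k + 1) * h (k + 1) := hrec (k + 1)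
    _ < A * (A * h (k + 1)) - A ^ 2 * h (k + 1) := by
      gcongr
      exacts [hh 1, hB 1]
    _ = 0 := by ring
  exact h₃.not_gt (hh 3)

lemma nonneg_of_tendsto_of_neg_le {f g : ℝ → ℝ} {L a : ℝ} (hf : Tendsto f atTop (𝓝 L))
    (hg : IntegrableOn g (Ioi a)) (hle : ∀ᶠ t in atTop, -g t ≤ f t) : 0 ≤ L := by
  by_contra! hL
  obtain ⟨b, hb⟩ := eventually_atTop.1 (hle.and (hf.eventually_lt_const (by linarith : L < L / 2)))
  have hconst : IntegrableOn (fun _ ↦ -(L / 2)) (Ioi (max a b)) := by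
    refine (hg.mono_set (Ioi_subset_Ioi (le_max_left a b))).mono' (by fun_prop) ?_
    filter_upwards [ae_restrict_mem measurableSet_Ioi] with t ht
    obtain ⟨hle, hlt⟩ := hb t ((le_max_right a b).trans (mem_Ioi.1 ht).le)
    rw [Real.norm_of_nonneg (by linarith)]
    linarith
  simp [integrableOn_const_iff, hL.ne] at hconst

lemma integrableOn_sq_comp_sub_of_isBigO_exp_neg {f : ℝ → ℝ} {b : ℝ} (hb : 0 < b)
    (hf : Continuous f) (hO : f =O[atTop] fun x ↦ Real.exp (-b * x)) (a ξ : ℝ) :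
    IntegrableOn (fun t ↦ f (t - ξ) ^ 2) (Ioi a) := by
  refine integrable_of_isBigO_exp_neg (mul_pos two_pos hb) (by fun_prop) ?_
  have hO_sq := (hO.comp_tendsto (tendsto_atTop_add_const_right atTop (-ξ) tendsto_id)).pow 2
  refine (hO_sq.trans ?_).congr_left fun t ↦ by simp [sub_eq_add_neg]
  refine .of_bound (Real.exp (2 * b * ξ)) (.of_forall fun t ↦ le_of_eq ?_)
  simp only [Function.comp_apply, id, Real.norm_eq_abs, Real.abs_exp, ← Real.exp_nat_mul,
    ← Real.exp_add]
  push_cast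
  ring_nf

lemma eqOn_zero_of_hasDerivAt_of_cauchy_zero {u u' V : ℝ → ℝ} {a t₀ : ℝ} (hV : Continuous V)
    (hu : ∀ t ∈ Ioi a, HasDerivAt u (u' t) t) (hu' : ∀ t ∈ Ioi a, HasDerivAt u' (V t * u t) t)
    (ht₀ : a < t₀) (hzero : u t₀ = 0) (hzero' : u' t₀ = 0) : EqOn u 0 (Ioi a) := by
  intro t ht
  obtain ⟨b, hb⟩ := exists_gt (max t t₀)
  obtain ⟨K, hK⟩ := isCompact_Icc.exists_bound_of_continuousOn (s := Icc a b) hV.continuousOn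
  have hlip : ∀ s ∈ Ioo a b, LipschitzOnWith (max 1 K.toNNReal)
      (fun y : ℝ × ℝ ↦ (y.2, V s * y.1)) univ := by
    intro s hs
    have hVs : ‖V s‖₊ ≤ K.toNNReal := by
      rw [← norm_toNNReal]
      exact Real.toNNReal_le_toNNReal (hK s (Ioo_subset_Icc_self hs))
    have hmul : LipschitzWith K.toNNReal fun y : ℝ × ℝ ↦ V s * y.1 := by
      rw [← mul_one K.toNNReal]
      exact ((lipschitzWith_smul (V s)).weaken hVs).comp LipschitzWith.prod_fst
    exact (LipschitzWith.prod_snd.prodMk hmul).lipschitzOnWith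
  have heq := ODE_solution_unique_of_mem_Ioo (f := fun s ↦ (u s, u' s)) (g := fun _ ↦ 0) hlip
    ⟨ht₀, (le_max_right _ _).trans_lt hb⟩
    (fun s hs ↦ ⟨(hu s hs.1).prodMk (hu' s hs.1), mem_univ _⟩)
    (fun s _ ↦ ⟨(hasDerivAt_const s 0).congr_deriv (Prod.ext rfl (mul_zero _).symm), mem_univ _⟩)
    (Prod.ext hzero hzero')
  exact congrArg Prod.fst (heq ⟨ht, (le_max_left _ _).trans_lt hb⟩)

lemma div_mul_sq_sub_le_integral {φ φ' V v v' : ℝ → ℝ} {a b : ℝ} (hab : a ≤ b)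
    (hφ_pos : ∀ t ∈ Icc a b, 0 < φ t) (hφ : ∀ t ∈ Icc a b, HasDerivAt φ (φ' t) t)
    (hφ' : ∀ t ∈ Icc a b, HasDerivAt φ' (V t * φ t) t)
    (hv : ∀ t ∈ Icc a b, HasDerivAt v (v' t) t)
    (hint : IntegrableOn (fun t ↦ v' t ^ 2 + V t * v t ^ 2) (Icc a b)) :
    φ' b / φ b * v b ^ 2 - φ' a / φ a * v a ^ 2 ≤ ∫ t in a..b, v' t ^ 2 + V t * v t ^ 2 := by
  -- Picone's identity: `(v' ^ 2 + V * v ^ 2) - (φ' / φ * v ^ 2)' = (v' - φ' / φ * v) ^ 2`.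
  have hderiv : ∀ t ∈ Icc a b, HasDerivAt (fun t ↦ φ' t / φ t * v t ^ 2)
      (v' t ^ 2 + V t * v t ^ 2 - (v' t - φ' t / φ t * v t) ^ 2) t := by
    intro t ht
    have := (hφ_pos t ht).ne'
    refine (((hφ' t ht).div (hφ t ht) this).mul ((hv t ht).pow 2)).congr_deriv ?_
    simp only [Pi.pow_apply, Pi.div_apply]
    field_simp
    push_cast
    ring
  exact intervalIntegral.sub_le_integral_of_hasDeriv_right_of_le hab
    (fun t ht ↦ (hderiv t ht).continuousAt.continuousWithinAt)
    (fun t ht ↦ (hderiv t (Ioo_subset_Icc_self ht)).hasDerivWithinAt) hint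
    fun t _ ↦ sub_le_self _ (sq_nonneg _)

/-! ### The form domain -/

namespace MemB1p

variable {u v : ℝ → ℝ}

lemma memLp (hu : MemB1p u) : MemLp u 2 (volume.restrict (Ioi 0)) :=
  (memLp_two_iff_integrable_sq hu.1.continuous.aestronglyMeasurable).2 hu.2.1

lemma memLp_deriv (hu : MemB1p u) : MemLp (deriv u) 2 (volume.restrict (Ioi 0)) :=
  (memLp_two_iff_integrable_sq (measurable_deriv u).aestronglyMeasurable).2 hu.2.2.1

lemma integrableOn_mul_deriv (hu : MemB1p u) (hv : MemB1p v) :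
    IntegrableOn (fun t ↦ u t * deriv v t) (Ioi 0) :=
  hu.memLp.integrable_mul hv.memLp_deriv

lemma integrableOn_sub_sq_mul_sq (hu : MemB1p u) (ξ : ℝ) :
    IntegrableOn (fun t ↦ (t - ξ) ^ 2 * u t ^ 2) (Ioi 0) := by
  have hid : MemLp (fun t ↦ t * u t) 2 (volume.restrict (Ioi 0)) :=
    (memLp_two_iff_integrable_sq (continuous_id.mul hu.1.continuous).aestronglyMeasurable).2
      (hu.2.2.2.congr_fun (fun t _ ↦ (mul_pow t (u t) 2).symm) measurableSet_Ioi)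
  refine (hid.sub (hu.memLp.const_mul ξ)).integrable_sq.congr (.of_forall fun t ↦ ?_)
  simp only [Pi.sub_apply]
  ring

lemma integrableOn_energy (hu : MemB1p u) (ξ : ℝ) :
    IntegrableOn (fun t ↦ deriv u t ^ 2 + (t - ξ) ^ 2 * u t ^ 2) (Ioi 0) :=
  hu.2.2.1.add (hu.integrableOn_sub_sq_mul_sq ξ)

lemma integrableOn_energy_sub (hu : MemB1p u) (ξ lam : ℝ) :
    IntegrableOn (fun t ↦ deriv u t ^ 2 + ((t - ξ) ^ 2 - lam) * u t ^ 2) (Ioi 0) := by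
  refine ((hu.integrableOn_energy ξ).sub (hu.2.1.const_mul lam)).congr (.of_forall fun t ↦ ?_)
  simp only [Pi.sub_apply]
  ring

lemma integral_energy_sub (hu : MemB1p u) (ξ lam : ℝ) :
    ∫ t in Ioi 0, (deriv u t ^ 2 + ((t - ξ) ^ 2 - lam) * u t ^ 2) =
      qRobin 0 ξ u - lam * np u := by
  have hint : IntegrableOn (fun t ↦ lam * u t ^ 2) (Ioi 0) := hu.2.1.const_mul lam
  rw [qRobin, np, zero_mul, add_zero, ← integral_const_mul,
    ← integral_sub (hu.integrableOn_energy ξ) hint]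
  congr! 2 with t
  ring

lemma qRobin_zero_eq (hu : MemB1p u) {ξ lam : ℝ}
    (hode : ∀ t ∈ Ici 0, HasDerivAt (deriv u) (((t - ξ) ^ 2 - lam) * u t) t) :
    qRobin 0 ξ u = lam * np u - u 0 * deriv u 0 := by
  have hderiv : ∀ t ∈ Ici (0 : ℝ), HasDerivAt (fun t ↦ u t * deriv u t)
      (deriv u t ^ 2 + ((t - ξ) ^ 2 - lam) * u t ^ 2) t := fun t ht ↦
    ((hu.1 t).hasDerivAt.mul (hode t ht)).congr_deriv (by ring)
  have hint := hu.integrableOn_energy_sub ξ lam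
  have hlim := tendsto_zero_of_hasDerivAt_of_integrableOn_Ioi
    (fun t ht ↦ hderiv t (Ioi_subset_Ici_self ht)) hint (hu.integrableOn_mul_deriv hu)
  have hparts := integral_Ioi_of_hasDerivAt_of_tendsto' hderiv hint hlim
  rw [hu.integral_energy_sub] at hparts
  linear_combination hparts

end MemB1p

lemma np_nonneg (u : ℝ → ℝ) : 0 ≤ np u := integral_nonneg fun _ ↦ sq_nonneg _

lemma np_ne_zero_iff {u : ℝ → ℝ} (hu : MemB1p u) : np u ≠ 0 ↔ ∃ t > 0, u t ≠ 0 := by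
  have hopen : IsOpen ((Function.support fun t ↦ u t ^ 2) ∩ Ioi 0) :=
    (hu.1.continuous.pow 2).isOpen_support.inter isOpen_Ioi
  rw [← (np_nonneg u).lt_iff_ne', np, setIntegral_pos_iff_support_of_nonneg_ae
    (.of_forall fun t ↦ sq_nonneg _) hu.2.1, hopen.measure_pos_iff volume]
  simp [Set.Nonempty, and_comm]

lemma qRobin_zero_nonneg (ξ : ℝ) (u : ℝ → ℝ) : 0 ≤ qRobin 0 ξ u := by
  rw [qRobin, zero_mul, add_zero]
  exact integral_nonneg fun t ↦ by positivity

lemma lambda1N_le_of_qRobin_eq {ξ lam : ℝ} {u : ℝ → ℝ} (hu : MemB1p u) (hnp : np u ≠ 0)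
    (hq : qRobin 0 ξ u = lam * np u) : lambda1N ξ ≤ lam := by
  refine csInf_le ⟨0, ?_⟩ ⟨u, hu, hnp, by rw [hq, mul_div_cancel_right₀ _ hnp]⟩
  rintro _ ⟨v, _, _, rfl⟩
  exact div_nonneg (qRobin_zero_nonneg ξ v) (np_nonneg v)

lemma lambda1D_le_of_qRobin_eq {ξ lam : ℝ} {u : ℝ → ℝ} (hu : MemB1p u) (hu₀ : u 0 = 0)
    (hnp : np u ≠ 0) (hq : qRobin 0 ξ u = lam * np u) : lambda1D ξ ≤ lam := by
  refine csInf_le ⟨0, ?_⟩ ⟨u, hu, hu₀, hnp, by rw [hq, mul_div_cancel_right₀ _ hnp]⟩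
  rintro _ ⟨v, _, _, _, rfl⟩
  exact div_nonneg (qRobin_zero_nonneg ξ v) (np_nonneg v)

lemma MemB1p.wronskian_eq_zero {u v V : ℝ → ℝ} (hu : MemB1p u) (hv : MemB1p v)
    (hu' : ∀ t ∈ Ioi 0, HasDerivAt (deriv u) (V t * u t) t)
    (hv' : ∀ t ∈ Ioi 0, HasDerivAt (deriv v) (V t * v t) t) {t : ℝ} (ht : 0 < t) :
    u t * deriv v t - v t * deriv u t = 0 := by
  set W := fun t ↦ u t * deriv v t - v t * deriv u t
  have hW_deriv : ∀ t ∈ Ioi 0, HasDerivAt W 0 t := fun t ht ↦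
    (((hu.1 t).hasDerivAt.mul (hv' t ht)).sub ((hv.1 t).hasDerivAt.mul (hu' t ht))).congr_deriv
      (by ring)
  have hW_const : EqOn W (fun _ ↦ W t) (Ioi 0) := fun s hs ↦
    isOpen_Ioi.is_const_of_deriv_eq_zero isPreconnected_Ioi
      (fun r hr ↦ (hW_deriv r hr).differentiableAt.differentiableWithinAt)
      (fun r hr ↦ (hW_deriv r hr).deriv) hs ht
  have hW_int : IntegrableOn (fun _ ↦ W t) (Ioi (0 : ℝ)) :=
    ((hu.integrableOn_mul_deriv hv).sub (hv.integrableOn_mul_deriv hu)).congr_fun hW_const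
      measurableSet_Ioi
  simpa [integrableOn_const_iff] using hW_int

lemma MemB1p.exists_eqOn_const_mul {u v V : ℝ → ℝ} (hV : Continuous V) (hu : MemB1p u)
    (hv : MemB1p v) (hnp : np u ≠ 0) (hu' : ∀ t ∈ Ioi 0, HasDerivAt (deriv u) (V t * u t) t)
    (hv' : ∀ t ∈ Ioi 0, HasDerivAt (deriv v) (V t * v t) t) :
    ∃ c, EqOn v (fun t ↦ c * u t) (Ici 0) := by
  obtain ⟨t₀, ht₀, hne⟩ := (np_ne_zero_iff hu).1 hnp
  set c := v t₀ / u t₀ with hc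
  have hzero : EqOn (fun t ↦ v t - c * u t) 0 (Ioi 0) := by
    refine eqOn_zero_of_hasDerivAt_of_cauchy_zero hV
      (fun t _ ↦ (hv.1 t).hasDerivAt.sub ((hu.1 t).hasDerivAt.const_mul c))
      (fun t ht ↦ ((hv' t ht).sub ((hu' t ht).const_mul c)).congr_deriv (by ring)) ht₀ ?_ ?_
    · simp only [hc]
      field_simp
      ring
    · have hW := hu.wronskian_eq_zero hv hu' hv' ht₀
      simp only [hc]
      field_simp
      linear_combination hW
  have heq : EqOn v (fun t ↦ c * u t) (Ioi 0) := fun t ht ↦ sub_eq_zero.1 (hzero ht)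
  refine ⟨c, ?_⟩
  rw [← closure_Ioi]
  exact heq.closure hv.1.continuous (hu.1.continuous.const_mul c)

/-! ### Hermite functions of real order -/

/-- The integrand of the representation `H_{-p} x = Γ(p)⁻¹ * ∫ s > 0, s ^ (p - 1) * exp (-2xs - s²)`
of the Hermite functions of negative order. -/
def hermiteKernel (p x s : ℝ) : ℝ := s ^ (p - 1) * Real.exp (-2 * x * s - s ^ 2)

/-- The unnormalized Hermite function `Γ(p) * H_{-p} x`; the integral converges for `0 < p`. -/
def hermiteIntegral (p x : ℝ) : ℝ := ∫ s in Ioi (0 : ℝ), hermiteKernel p x s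

lemma measurable_hermiteKernel (p x : ℝ) : Measurable (hermiteKernel p x) := by
  unfold hermiteKernel
  fun_prop

lemma hermiteKernel_pos (p x : ℝ) {s : ℝ} (hs : 0 < s) : 0 < hermiteKernel p x s :=
  mul_pos (Real.rpow_pos_of_pos hs _) (Real.exp_pos _)

lemma hermiteKernel_add_one (p x : ℝ) {s : ℝ} (hs : 0 < s) :
    hermiteKernel (p + 1) x s = s * hermiteKernel p x s := by
  rw [hermiteKernel, hermiteKernel, add_sub_right_comm, Real.rpow_add_one hs.ne']
  ring

lemma hermiteKernel_le_of_le (p : ℝ) {x y s : ℝ} (hxy : x ≤ y) (hs : 0 < s) :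
    hermiteKernel p y s ≤ hermiteKernel p x s := by
  unfold hermiteKernel
  gcongr ?_ * Real.exp ?_
  nlinarith

lemma integrableOn_hermiteKernel {p : ℝ} (hp : 0 < p) (x : ℝ) :
    IntegrableOn (hermiteKernel p x) (Ioi 0) := by
  have hgauss := (integrableOn_rpow_mul_exp_neg_mul_sq (b := 1 / 2) (by norm_num) (s := p - 1)
    (by linarith)).const_mul (Real.exp (2 * x ^ 2))
  refine hgauss.mono' (measurable_hermiteKernel p x).aestronglyMeasurable ?_
  filter_upwards [ae_restrict_mem measurableSet_Ioi] with s (hs : 0 < s)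
  rw [Real.norm_of_nonneg (hermiteKernel_pos p x hs).le, hermiteKernel, mul_left_comm,
    ← Real.exp_add]
  gcongr
  nlinarith [sq_nonneg (2 * x + s)]

lemma hermiteIntegral_pos {p : ℝ} (hp : 0 < p) (x : ℝ) : 0 < hermiteIntegral p x := by
  refine (setIntegral_pos_iff_support_of_nonneg_ae ?_ (integrableOn_hermiteKernel hp x)).2 ?_
  · filter_upwards [ae_restrict_mem measurableSet_Ioi] with s hs
    exact (hermiteKernel_pos p x hs).le
  · have hsupp : Ioi 0 ⊆ Function.support (hermiteKernel p x) := fun s hs ↦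
      (hermiteKernel_pos p x hs).ne'
    simp [inter_eq_right.2 hsupp]

lemma hasDerivAt_hermiteKernel (p x : ℝ) {s : ℝ} (hs : 0 < s) :
    HasDerivAt (hermiteKernel p · s) (-2 * hermiteKernel (p + 1) x s) x := by
  have hexp : HasDerivAt (fun y : ℝ ↦ -2 * y * s - s ^ 2) (-2 * s) x := by
    simpa using (((hasDerivAt_id x).const_mul (-2)).mul_const s).sub_const (s ^ 2)
  refine (hexp.exp.const_mul (s ^ (p - 1))).congr_deriv ?_
  rw [hermiteKernel_add_one p x hs, hermiteKernel]
  ring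

lemma hasDerivAt_hermiteIntegral {p : ℝ} (hp : 0 < p) (x : ℝ) :
    HasDerivAt (hermiteIntegral p) (-2 * hermiteIntegral (p + 1) x) x := by
  have hp' : 0 < p + 1 := by linarith
  have key := (hasDerivAt_integral_of_dominated_loc_of_deriv_le
    (μ := volume.restrict (Ioi (0 : ℝ))) (F' := fun y s ↦ -2 * hermiteKernel (p + 1) y s)
    (bound := fun s ↦ 2 * hermiteKernel (p + 1) (x - 1) s) (Metric.ball_mem_nhds x one_pos)
    (.of_forall fun y ↦ (measurable_hermiteKernel p y).aestronglyMeasurable)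
    (integrableOn_hermiteKernel hp x)
    ((measurable_hermiteKernel (p + 1) x).const_mul _).aestronglyMeasurable ?_
    ((integrableOn_hermiteKernel hp' (x - 1)).const_mul 2) ?_).2
  · rwa [integral_const_mul] at key
  · filter_upwards [ae_restrict_mem measurableSet_Ioi] with s (hs : 0 < s) y hy
    have hy : x - 1 ≤ y := by
      rw [Metric.mem_ball, Real.dist_eq, abs_lt] at hy
      linarith
    rw [norm_mul, Real.norm_of_nonneg (hermiteKernel_pos _ y hs).le, norm_neg, Real.norm_two]
    gcongr
    exact hermiteKernel_le_of_le _ hy hs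
  · filter_upwards [ae_restrict_mem measurableSet_Ioi] with s hs y _
    exact hasDerivAt_hermiteKernel p y hs

lemma continuousAt_hermiteIntegral_left {p : ℝ} (hp : 0 < p) (x : ℝ) :
    ContinuousAt (hermiteIntegral · x) p := by
  refine continuousAt_of_dominated
    (bound := fun s ↦ hermiteKernel (p / 2) x s + hermiteKernel (p + 1) x s)
    (.of_forall fun q ↦ (measurable_hermiteKernel q x).aestronglyMeasurable) ?_
    ((integrableOn_hermiteKernel (half_pos hp) x).add
      (integrableOn_hermiteKernel (by linarith) x)) ?_
  · filter_upwards [Ioo_mem_nhds (half_lt_self hp) (lt_add_one p)] with q hq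
    filter_upwards [ae_restrict_mem measurableSet_Ioi] with s (hs : 0 < s)
    rw [Real.norm_of_nonneg (hermiteKernel_pos q x hs).le]
    unfold hermiteKernel
    rw [← add_mul]
    gcongr
    rcases le_total s 1 with h | h
    · have := Real.rpow_le_rpow_of_exponent_ge hs h (sub_le_sub_right hq.1.le 1)
      linarith [Real.rpow_nonneg hs.le (p + 1 - 1)]
    · have := Real.rpow_le_rpow_of_exponent_le h (sub_le_sub_right hq.2.le 1)
      linarith [Real.rpow_nonneg hs.le (p / 2 - 1)]
  · filter_upwards [ae_restrict_mem measurableSet_Ioi] with s (hs : 0 < s)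
    exact (continuousAt_const.rpow (by fun_prop) (.inl hs.ne')).mul continuousAt_const

lemma hermiteIntegral_eq_add {p : ℝ} (hp : 0 < p) (x : ℝ) :
    p * hermiteIntegral p x =
      2 * x * hermiteIntegral (p + 1) x + 2 * hermiteIntegral (p + 2) x := by
  have hint := (integrableOn_hermiteKernel hp x).const_mul p
  have hint₁ := (integrableOn_hermiteKernel (p := p + 1) (by linarith) x).const_mul (2 * x)
  have hint₂ := (integrableOn_hermiteKernel (p := p + 2) (by linarith) x).const_mul 2
  have hint₁₂ : IntegrableOn (fun s ↦ 2 * x * hermiteKernel (p + 1) x s +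
      2 * hermiteKernel (p + 2) x s) (Ioi 0) := hint₁.add hint₂
  have hderiv : ∀ s ∈ Ioi (0 : ℝ), HasDerivAt (hermiteKernel (p + 1) x)
      (p * hermiteKernel p x s -
        (2 * x * hermiteKernel (p + 1) x s + 2 * hermiteKernel (p + 2) x s)) s := by
    intro s (hs : 0 < s)
    have hexp : HasDerivAt (fun s : ℝ ↦ -2 * x * s - s ^ 2) (-2 * x - 2 * s) s :=
      (((hasDerivAt_id s).const_mul (-2 * x)).sub ((hasDerivAt_id s).pow 2)).congr_deriv (by simp)
    refine ((Real.hasDerivAt_rpow_const (p := p + 1 - 1) (.inl hs.ne')).mul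
      hexp.exp).congr_deriv ?_
    rw [show p + 2 = p + 1 + 1 by ring, hermiteKernel_add_one (p + 1) x hs]
    simp only [hermiteKernel, add_sub_cancel_right]
    ring
  have hcont : ContinuousWithinAt (hermiteKernel (p + 1) x) (Ici 0) 0 := by
    refine (ContinuousAt.mul ?_ (by fun_prop)).continuousWithinAt
    exact Real.continuousAt_rpow_const _ _ (.inr (by linarith))
  have hbdry : hermiteKernel (p + 1) x 0 = 0 := by simp [hermiteKernel, Real.zero_rpow hp.ne']
  have hlim := tendsto_zero_of_hasDerivAt_of_integrableOn_Ioi hderiv (hint.sub hint₁₂)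
    (integrableOn_hermiteKernel (by linarith) x)
  have hparts := integral_Ioi_of_hasDerivAt_of_tendsto hcont hderiv (hint.sub hint₁₂) hlim
  rw [hbdry, sub_zero, integral_sub hint hint₁₂, integral_add hint₁ hint₂,
    integral_const_mul, integral_const_mul, integral_const_mul] at hparts
  exact sub_eq_zero.1 hparts

lemma hermiteIntegral_one_add_two (x : ℝ) :
    2 * x * hermiteIntegral 1 x + 2 * hermiteIntegral 2 x = 1 := by
  have hint₁ := (integrableOn_hermiteKernel one_pos x).const_mul (2 * x)
  have hint₂ := (integrableOn_hermiteKernel two_pos x).const_mul 2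
  have hexp : EqOn (hermiteKernel 1 x) (fun s ↦ Real.exp (-2 * x * s - s ^ 2)) (Ioi 0) :=
    fun s _ ↦ by simp [hermiteKernel]
  have hderiv : ∀ s ∈ Ici (0 : ℝ), HasDerivAt (fun s ↦ -Real.exp (-2 * x * s - s ^ 2))
      (2 * x * hermiteKernel 1 x s + 2 * hermiteKernel 2 x s) s := by
    intro s _
    have h : HasDerivAt (fun s : ℝ ↦ -2 * x * s - s ^ 2) (-2 * x - 2 * s) s :=
      (((hasDerivAt_id s).const_mul (-2 * x)).sub ((hasDerivAt_id s).pow 2)).congr_deriv (by simp)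
    refine h.exp.neg.congr_deriv ?_
    norm_num [hermiteKernel]
    ring
  have hlim := tendsto_zero_of_hasDerivAt_of_integrableOn_Ioi
    (fun s hs ↦ hderiv s (Ioi_subset_Ici_self hs)) (hint₁.add hint₂)
    (((integrableOn_hermiteKernel one_pos x).congr_fun hexp measurableSet_Ioi).neg)
  have hparts := integral_Ioi_of_hasDerivAt_of_tendsto' hderiv (hint₁.add hint₂) hlim
  rw [integral_add hint₁ hint₂, integral_const_mul, integral_const_mul] at hparts
  simpa [hermiteIntegral] using hparts

/-- The Hermite function `H_ν` of real order `ν`, extending the physicists' Hermite polynomials: the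
solution of `y'' - 2 x y' + 2 ν y = 0` of polynomial growth at `+∞`. For `ν < 0` it is given by its
integral representation, and it is continued to `0 ≤ ν` by the three-term recurrence. -/
def hermiteFun (ν : ℝ) : ℝ → ℝ :=
  if ν < 0 then fun x ↦ hermiteIntegral (-ν) x / Real.Gamma (-ν)
  else fun x ↦ 2 * x * hermiteFun (ν - 1) x - 2 * (ν - 1) * hermiteFun (ν - 2) x
termination_by ⌊ν + 1⌋₊
decreasing_by
  all_goals
    have hν : 0 ≤ ν := by linarith
    rw [Nat.floor_add_one hν, Nat.lt_add_one_iff]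
    exact Nat.floor_le_floor (by linarith)

lemma hermiteFun_of_neg {ν : ℝ} (hν : ν < 0) (x : ℝ) :
    hermiteFun ν x = hermiteIntegral (-ν) x / Real.Gamma (-ν) := by
  rw [hermiteFun, if_pos hν]

lemma hermiteFun_pos_of_neg {ν : ℝ} (hν : ν < 0) (x : ℝ) : 0 < hermiteFun ν x := by
  rw [hermiteFun_of_neg hν]
  exact div_pos (hermiteIntegral_pos (neg_pos.2 hν) x) (Real.Gamma_pos_of_pos (neg_pos.2 hν))

lemma hermiteFun_zero (x : ℝ) : hermiteFun 0 x = 1 := by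
  rw [hermiteFun, if_neg (lt_irrefl 0), hermiteFun_of_neg (by norm_num),
    hermiteFun_of_neg (by norm_num)]
  norm_num [Real.Gamma_two]
  linear_combination hermiteIntegral_one_add_two x

lemma Gamma_neg_sub_one {ν : ℝ} (hν : ν ≠ 0) : Real.Gamma (-(ν - 1)) = -ν * Real.Gamma (-ν) := by
  rw [neg_sub, sub_eq_neg_add, Real.Gamma_add_one (neg_ne_zero.2 hν)]

lemma hermiteFun_recurrence (ν x : ℝ) :
    hermiteFun ν x = 2 * x * hermiteFun (ν - 1) x - 2 * (ν - 1) * hermiteFun (ν - 2) x := by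
  rcases lt_or_ge ν 0 with hν | hν
  · have hΓ := (Real.Gamma_pos_of_pos (neg_pos.2 hν)).ne'
    have hrec := hermiteIntegral_eq_add (neg_pos.2 hν) x
    rw [hermiteFun_of_neg hν, hermiteFun_of_neg (by linarith), hermiteFun_of_neg (by linarith),
      show ν - 2 = ν - 1 - 1 by ring, Gamma_neg_sub_one (ν := ν - 1) (by linarith),
      Gamma_neg_sub_one hν.ne, show -(ν - 1) = -ν + 1 by ring,
      show -(ν - 1 - 1) = -ν + 2 by ring]
    have : -ν + 1 ≠ 0 := by linarith
    have := hν.ne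
    field_simp
    linear_combination (ν - 1) * hrec
  · rw [hermiteFun, if_neg hν.not_gt]

lemma hasDerivAt_hermiteFun (ν x : ℝ) :
    HasDerivAt (hermiteFun ν) (2 * ν * hermiteFun (ν - 1) x) x := by
  induction ν using hermiteFun.induct with
  | case1 ν hν =>
    have hΓ := (Real.Gamma_pos_of_pos (neg_pos.2 hν)).ne'
    rw [funext (hermiteFun_of_neg hν), hermiteFun_of_neg (by linarith), Gamma_neg_sub_one hν.ne,
      show -(ν - 1) = -ν + 1 by ring]
    refine ((hasDerivAt_hermiteIntegral (neg_pos.2 hν) x).div_const _).congr_deriv ?_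
    have := hν.ne
    field_simp
  | case2 ν _ ih₁ ih₂ =>
    rw [funext (hermiteFun_recurrence ν)]
    refine ((((hasDerivAt_id x).const_mul 2).mul ih₁).sub
      (ih₂.const_mul (2 * (ν - 1)))).congr_deriv ?_
    have hrec := hermiteFun_recurrence (ν - 1) x
    rw [show ν - 1 - 2 = ν - 2 - 1 by ring] at hrec
    rw [show ν - 1 - 1 = ν - 2 by ring] at hrec ⊢
    simp only [id]
    linear_combination (-2 * (ν - 1)) * hrec

lemma continuous_hermiteFun_left (x : ℝ) : Continuous (hermiteFun · x) := by
  refine continuous_iff_continuousAt.2 fun ν ↦ ?_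
  induction ν using hermiteFun.induct with
  | case1 ν hν =>
    have hG : ContinuousAt (fun ν ↦ hermiteIntegral (-ν) x) ν :=
      ContinuousAt.comp (g := (hermiteIntegral · x)) (f := Neg.neg)
        (continuousAt_hermiteIntegral_left (neg_pos.2 hν) x) continuousAt_neg
    have hΓ : ContinuousAt (fun ν ↦ Real.Gamma (-ν)) ν :=
      ContinuousAt.comp (g := Real.Gamma) (f := Neg.neg) (Real.differentiableAt_Gamma fun m ↦
        ne_of_gt (by linarith [m.cast_nonneg (α := ℝ)])).continuousAt continuousAt_neg
    refine (hG.div hΓ (Real.Gamma_pos_of_pos (neg_pos.2 hν)).ne').congr ?_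
    filter_upwards [Iio_mem_nhds hν] with μ hμ
    exact (hermiteFun_of_neg hμ x).symm
  | case2 ν _ ih₁ ih₂ =>
    have h₁ : ContinuousAt (fun ν ↦ hermiteFun (ν - 1) x) ν :=
      ContinuousAt.comp (f := (· - 1)) ih₁ (by fun_prop)
    have h₂ : ContinuousAt (fun ν ↦ hermiteFun (ν - 2) x) ν :=
      ContinuousAt.comp (f := (· - 2)) ih₂ (by fun_prop)
    refine ContinuousAt.congr ?_ (.of_forall fun μ ↦ (hermiteFun_recurrence μ x).symm)
    exact (continuousAt_const.mul h₁).sub (ContinuousAt.mul (by fun_prop) h₂)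

lemma continuous_hermiteFun (ν : ℝ) : Continuous (hermiteFun ν) :=
  continuous_iff_continuousAt.2 fun x ↦ (hasDerivAt_hermiteFun ν x).continuousAt

lemma antitone_hermiteFun_of_neg {ν : ℝ} (hν : ν < 0) : Antitone (hermiteFun ν) :=
  antitone_of_hasDerivAt_nonpos (hasDerivAt_hermiteFun ν) fun x ↦
    mul_nonpos_of_nonpos_of_nonneg (by linarith) (hermiteFun_pos_of_neg (by linarith) x).le

lemma hermiteFun_pos_of_le {ν a x : ℝ} (h : ∀ μ ≤ ν, 0 < hermiteFun μ a) (hx : a ≤ x) :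
    0 < hermiteFun ν x := by
  induction ν using hermiteFun.induct generalizing x with
  | case1 ν hν => exact hermiteFun_pos_of_neg hν x
  | case2 ν hν ih _ =>
    have hmono : MonotoneOn (hermiteFun ν) (Ici a) := by
      refine monotoneOn_of_hasDerivWithinAt_nonneg (convex_Ici a)
        (continuous_hermiteFun ν).continuousOn
        (fun y _ ↦ (hasDerivAt_hermiteFun ν y).hasDerivWithinAt) fun y hy ↦ ?_
      rw [interior_Ici] at hy
      have := ih (fun μ hμ ↦ h μ (by linarith)) hy.le
      have := not_lt.1 hν
      positivity
    exact (h ν le_rfl).trans_le (hmono self_mem_Ici hx hx)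

lemma exists_gt_hermiteFun_ne_zero (ν a : ℝ) : ∃ x > a, hermiteFun ν x ≠ 0 := by
  induction ν using hermiteFun.induct with
  | case1 ν hν => exact ⟨a + 1, lt_add_one a, (hermiteFun_pos_of_neg hν _).ne'⟩
  | case2 ν _ ih _ =>
    rcases eq_or_ne ν 0 with rfl | hν
    · exact ⟨a + 1, lt_add_one a, by simp [hermiteFun_zero]⟩
    · by_contra! hzero
      obtain ⟨x, hx, hne⟩ := ih
      have hderiv : HasDerivAt (hermiteFun ν) 0 x :=
        (hasDerivAt_const x 0).congr_of_eventuallyEq <| by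
          filter_upwards [Ioi_mem_nhds hx] with y hy using hzero y hy
      have := (hasDerivAt_hermiteFun ν x).unique hderiv
      simp_all

lemma hermiteFun_add_one (ν x : ℝ) :
    hermiteFun (ν + 1) x = 2 * x * hermiteFun ν x - 2 * ν * hermiteFun (ν - 1) x := by
  rw [hermiteFun_recurrence, add_sub_cancel_right, show ν + 1 - 2 = ν - 1 by ring]

lemma hermiteFun_add_nat_add_two (ν x : ℝ) (k : ℕ) :
    hermiteFun (ν + (k + 2 : ℕ)) x =
      2 * x * hermiteFun (ν + (k + 1 : ℕ)) x - 2 * (ν + k + 1) * hermiteFun (ν + k) x := by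
  rw [hermiteFun_recurrence]
  push_cast
  ring_nf

lemma tendsto_two_mul_add_nat (ν : ℝ) : Tendsto (fun k : ℕ ↦ 2 * (ν + k + 1)) atTop atTop :=
  ((tendsto_const_nhds.add_atTop tendsto_natCast_atTop_atTop).atTop_add
    tendsto_const_nhds).const_mul_atTop two_pos

lemma frequently_hermiteFun_nonpos (ν x : ℝ) :
    ∃ᶠ k : ℕ in atTop, hermiteFun (ν + k) x ≤ 0 :=
  frequently_nonpos_of_recurrence ((tendsto_two_mul_add_nat ν).eventually_gt_atTop _)
    (hermiteFun_add_nat_add_two ν x)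

lemma frequently_hermiteFun_nonneg (ν x : ℝ) :
    ∃ᶠ k : ℕ in atTop, 0 ≤ hermiteFun (ν + k) x := by
  have hrec (k : ℕ) : -hermiteFun (ν + (k + 2 : ℕ)) x =
      2 * x * -hermiteFun (ν + (k + 1 : ℕ)) x - 2 * (ν + k + 1) * -hermiteFun (ν + k) x := by
    rw [hermiteFun_add_nat_add_two]
    ring
  simpa using frequently_nonpos_of_recurrence (h := fun k ↦ -hermiteFun (ν + k) x)
    ((tendsto_two_mul_add_nat ν).eventually_gt_atTop _) hrec

lemma exists_least_order_hermiteFun_eq_zero (x : ℝ) :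
    ∃ ν > 0, hermiteFun ν x = 0 ∧ ∀ μ < ν, 0 < hermiteFun μ x := by
  set S := {ν | hermiteFun ν x ≤ 0}
  have hbdd : BddBelow S := ⟨0, fun ν hν ↦ not_lt.1 fun h ↦
    (hermiteFun_pos_of_neg h x).not_ge hν⟩
  have hne : S.Nonempty := (frequently_hermiteFun_nonpos 0 x).exists.elim fun _ h ↦ ⟨_, h⟩
  have hmem : sInf S ∈ S :=
    (isClosed_le (continuous_hermiteFun_left x) continuous_const).csInf_mem hne hbdd
  have hlt : ∀ μ < sInf S, 0 < hermiteFun μ x := fun μ hμ ↦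
    not_le.1 fun h ↦ (csInf_le hbdd h).not_gt hμ
  have hzero : hermiteFun (sInf S) x = 0 := le_antisymm hmem <|
    ge_of_tendsto ((continuous_hermiteFun_left x).continuousWithinAt (s := Iio (sInf S)))
      (eventually_mem_nhdsWithin.mono fun μ hμ ↦ (hlt μ hμ).le)
  have hpos : 0 < sInf S := by
    refine (le_csInf hne fun ν hν ↦ ?_).lt_of_ne' fun h ↦ ?_
    · exact not_lt.1 fun h ↦ (hermiteFun_pos_of_neg h x).not_ge hν
    · rw [h, hermiteFun_zero] at hzero
      exact one_ne_zero hzero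
  exact ⟨sInf S, hpos, hzero, hlt⟩

lemma hermiteFun_sub_one_le {ν x : ℝ} (hν : ν < 0) (hx : 1 ≤ x) :
    2 * hermiteFun (ν - 1) x ≤ hermiteFun ν x := by
  have hpos_sub_one := hermiteFun_pos_of_neg (ν := ν - 1) (by linarith) x
  have hpos_sub_two := hermiteFun_pos_of_neg (ν := ν - 2) (by linarith) x
  rw [hermiteFun_recurrence ν]
  nlinarith [mul_nonneg (sub_nonneg.2 hx) hpos_sub_one.le]

/-! ### Weber functions -/

/-- The solution of Weber's equation `ψ'' = (x ^ 2 - (2 * ν + 1)) * ψ` decaying at `+∞`: up to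
normalization, the parabolic cylinder function `D_ν` at `√2 * x`. -/
def weberFun (ν x : ℝ) : ℝ := Real.exp (-x ^ 2 / 2) * hermiteFun ν x

lemma weberFun_pos_iff {ν x : ℝ} : 0 < weberFun ν x ↔ 0 < hermiteFun ν x :=
  mul_pos_iff_of_pos_left (Real.exp_pos _)

lemma weberFun_add_one (ν x : ℝ) :
    weberFun (ν + 1) x = 2 * x * weberFun ν x - 2 * ν * weberFun (ν - 1) x := by
  rw [weberFun, hermiteFun_add_one, weberFun, weberFun]
  ring

lemma hasDerivAt_weberFun_lowering (ν x : ℝ) :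
    HasDerivAt (weberFun ν) (2 * ν * weberFun (ν - 1) x - x * weberFun ν x) x := by
  have hexp : HasDerivAt (fun x : ℝ ↦ -x ^ 2 / 2) (-x) x :=
    ((hasDerivAt_pow 2 x).neg.div_const 2).congr_deriv (by simp; ring)
  refine (hexp.exp.mul (hasDerivAt_hermiteFun ν x)).congr_deriv ?_
  rw [weberFun, weberFun]
  ring

lemma hasDerivAt_weberFun (ν x : ℝ) :
    HasDerivAt (weberFun ν) (x * weberFun ν x - weberFun (ν + 1) x) x :=
  (hasDerivAt_weberFun_lowering ν x).congr_deriv (by rw [weberFun_add_one]; ring)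

lemma deriv_weberFun (ν x : ℝ) :
    deriv (weberFun ν) x = x * weberFun ν x - weberFun (ν + 1) x :=
  (hasDerivAt_weberFun ν x).deriv

lemma hasDerivAt_deriv_weberFun (ν x : ℝ) :
    HasDerivAt (deriv (weberFun ν)) ((x ^ 2 - (2 * ν + 1)) * weberFun ν x) x := by
  rw [funext (deriv_weberFun ν)]
  refine (((hasDerivAt_id x).mul (hasDerivAt_weberFun ν x)).sub
    (hasDerivAt_weberFun_lowering (ν + 1) x)).congr_deriv ?_
  simp only [id, add_sub_cancel_right]
  ring

lemma continuous_weberFun (ν : ℝ) : Continuous (weberFun ν) :=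
  continuous_iff_continuousAt.2 fun x ↦ (hasDerivAt_weberFun ν x).continuousAt

lemma continuous_deriv_weberFun (ν : ℝ) : Continuous (deriv (weberFun ν)) :=
  continuous_iff_continuousAt.2 fun x ↦ (hasDerivAt_deriv_weberFun ν x).continuousAt

lemma continuous_weberFun_left (x : ℝ) : Continuous (weberFun · x) :=
  (continuous_hermiteFun_left x).const_mul _

lemma continuous_deriv_weberFun_left (x : ℝ) : Continuous fun ν ↦ deriv (weberFun ν) x := by
  simp only [deriv_weberFun]
  exact ((continuous_weberFun_left x).const_mul x).sub
    ((continuous_weberFun_left x).comp (continuous_add_const 1))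

lemma deriv_weberFun_pos_of_eq_zero {ν x : ℝ} (hν : 0 < ν) (hzero : hermiteFun ν x = 0)
    (hpos : 0 < hermiteFun (ν - 1) x) : 0 < deriv (weberFun ν) x := by
  have := weberFun_pos_iff.2 hpos
  rw [(hasDerivAt_weberFun_lowering ν x).deriv, weberFun.eq_def ν, hzero, mul_zero, mul_zero,
    sub_zero]
  positivity

lemma exists_gt_mul_hermiteFun_le {ν x : ℝ} (hν : 0 < ν) (hzero : hermiteFun ν x = 0)
    (hpos : 0 < hermiteFun (ν - 1) x) : ∃ μ > ν, x * hermiteFun μ x ≤ hermiteFun (μ + 1) x := by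
  have hneg : hermiteFun (ν + 1) x < 0 := by
    rw [hermiteFun_add_one, hzero]
    linarith [mul_pos hν hpos]
  rcases le_or_gt x 0 with hx | hx
  · refine ⟨ν + 1, lt_add_one ν, ?_⟩
    rw [hermiteFun_add_one (ν + 1), add_sub_cancel_right, hzero]
    linarith [mul_nonneg_of_nonpos_of_nonpos hx hneg.le]
  · by_contra! hlt
    have hall (k : ℕ) : hermiteFun (ν + 1 + k) x < 0 := by
      induction k with
      | zero => simpa using hneg
      | succ k ih =>
        push_cast [← add_assoc]
        exact (hlt (ν + 1 + k) (by linarith [k.cast_nonneg (α := ℝ)])).trans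
          (mul_neg_of_pos_of_neg hx ih)
    obtain ⟨k, hk⟩ := (frequently_hermiteFun_nonneg (ν + 1) x).exists
    exact (hall k).not_ge hk

lemma exists_gt_deriv_weberFun_eq_zero {ν x : ℝ} (hν : 0 < ν) (hzero : hermiteFun ν x = 0)
    (hpos : 0 < hermiteFun (ν - 1) x) : ∃ μ > ν, deriv (weberFun μ) x = 0 := by
  obtain ⟨κ, hκ, hle⟩ := exists_gt_mul_hermiteFun_le hν hzero hpos
  have hκ_nonpos : deriv (weberFun κ) x ≤ 0 := by
    rw [deriv_weberFun, weberFun, weberFun, mul_left_comm, ← mul_sub]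
    exact mul_nonpos_of_nonneg_of_nonpos (Real.exp_pos _).le (sub_nonpos.2 hle)
  have hν_pos := deriv_weberFun_pos_of_eq_zero hν hzero hpos
  obtain ⟨μ, hμ, hμ_zero⟩ := intermediate_value_Icc' hκ.le
    (continuous_deriv_weberFun_left x).continuousOn ⟨hκ_nonpos, hν_pos.le⟩
  exact ⟨μ, hμ.1.lt_of_ne (by rintro rfl; exact hν_pos.ne' hμ_zero), hμ_zero⟩

lemma neg_mul_weberFun_le_deriv {ν x : ℝ} (hx : 1 ≤ x) (hpos : 0 < hermiteFun ν x)
    (hpos' : 0 < hermiteFun (ν - 1) x) :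
    -(|ν| + x) * weberFun ν x ≤ deriv (weberFun ν) x := by
  have hmul : -|ν| * hermiteFun ν x ≤ 2 * ν * hermiteFun (ν - 1) x := by
    rcases lt_or_ge ν 0 with hν | hν
    · rw [abs_of_neg hν, neg_neg]
      nlinarith [hermiteFun_sub_one_le hν hx]
    · rw [abs_of_nonneg hν]
      have : 0 ≤ ν * hermiteFun ν x := by positivity
      have : 0 ≤ ν * hermiteFun (ν - 1) x := by positivity
      linarith
  rw [(hasDerivAt_weberFun_lowering ν x).deriv, weberFun, weberFun]
  nlinarith [Real.exp_pos (-x ^ 2 / 2)]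

lemma isBigO_pow_mul_weberFun (ν : ℝ) (k : ℕ) :
    (fun x ↦ x ^ k * weberFun ν x) =O[atTop] fun x ↦ Real.exp (-(1 / 2) * x) := by
  induction ν using hermiteFun.induct generalizing k with
  | case1 ν hν =>
    have hbdd : hermiteFun ν =O[atTop] fun _ ↦ (1 : ℝ) := by
      refine .of_bound (hermiteFun ν 0) ?_
      filter_upwards [eventually_ge_atTop 0] with x hx
      rw [Real.norm_of_nonneg (hermiteFun_pos_of_neg hν x).le, norm_one, mul_one]
      exact antitone_hermiteFun_of_neg hν hx
    refine ((rpow_mul_exp_neg_mul_sq_isLittleO_exp_neg one_half_pos k).isBigO.mul hbdd).congr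
      (fun x ↦ ?_) fun x ↦ mul_one _
    rw [weberFun, Real.rpow_natCast, ← mul_assoc]
    ring_nf
  | case2 ν _ ih₁ ih₂ =>
    refine (((ih₁ (k + 1)).const_mul_left 2).sub
      ((ih₂ k).const_mul_left (2 * (ν - 1)))).congr_left fun x ↦ ?_
    rw [weberFun, weberFun, weberFun, hermiteFun_recurrence ν]
    ring

lemma hasDerivAt_weberFun_comp_sub (ν ξ t : ℝ) :
    HasDerivAt (fun t ↦ weberFun ν (t - ξ)) (deriv (weberFun ν) (t - ξ)) t :=
  (hasDerivAt_weberFun ν (t - ξ)).differentiableAt.hasDerivAt.comp_sub_const t ξ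

lemma deriv_weberFun_comp_sub (ν ξ : ℝ) :
    deriv (fun t ↦ weberFun ν (t - ξ)) = fun t ↦ deriv (weberFun ν) (t - ξ) :=
  funext fun t ↦ (hasDerivAt_weberFun_comp_sub ν ξ t).deriv

lemma hasDerivAt_deriv_weberFun_comp_sub (ν ξ t : ℝ) :
    HasDerivAt (deriv fun t ↦ weberFun ν (t - ξ))
      (((t - ξ) ^ 2 - (2 * ν + 1)) * weberFun ν (t - ξ)) t := by
  rw [deriv_weberFun_comp_sub]
  exact (hasDerivAt_deriv_weberFun ν (t - ξ)).comp_sub_const t ξ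

lemma memB1p_weberFun (ν ξ : ℝ) : MemB1p fun t ↦ weberFun ν (t - ξ) := by
  have hO (ν : ℝ) : weberFun ν =O[atTop] fun x ↦ Real.exp (-(1 / 2) * x) := by
    simpa using isBigO_pow_mul_weberFun ν 0
  have hO₁ : (fun x ↦ x * weberFun ν x) =O[atTop] fun x ↦ Real.exp (-(1 / 2) * x) := by
    simpa using isBigO_pow_mul_weberFun ν 1
  have hO_deriv : deriv (weberFun ν) =O[atTop] fun x ↦ Real.exp (-(1 / 2) * x) :=
    (hO₁.sub (hO (ν + 1))).congr_left fun x ↦ (deriv_weberFun ν x).symm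
  have hO_add : (fun x ↦ (x + ξ) * weberFun ν x) =O[atTop] fun x ↦ Real.exp (-(1 / 2) * x) :=
    (hO₁.add ((hO ν).const_mul_left ξ)).congr_left fun x ↦ (add_mul _ _ _).symm
  refine ⟨fun t ↦ (hasDerivAt_weberFun_comp_sub ν ξ t).differentiableAt,
    integrableOn_sq_comp_sub_of_isBigO_exp_neg one_half_pos (continuous_weberFun ν)
      (hO ν) 0 ξ, ?_, ?_⟩
  · rw [deriv_weberFun_comp_sub]
    exact integrableOn_sq_comp_sub_of_isBigO_exp_neg one_half_pos (continuous_deriv_weberFun ν)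
      hO_deriv 0 ξ
  · simpa [mul_pow] using integrableOn_sq_comp_sub_of_isBigO_exp_neg one_half_pos
      ((continuous_add_const ξ).mul (continuous_weberFun ν)) hO_add 0 ξ

lemma np_weberFun_ne_zero (ν ξ : ℝ) : np (fun t ↦ weberFun ν (t - ξ)) ≠ 0 := by
  obtain ⟨x, hx, hne⟩ := exists_gt_hermiteFun_ne_zero ν (-ξ)
  refine (np_ne_zero_iff (memB1p_weberFun ν ξ)).2 ⟨x + ξ, by linarith, ?_⟩
  rw [add_sub_cancel_right]
  exact mul_ne_zero (Real.exp_ne_zero _) hne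

/-! ### Neumann eigenvalues -/

lemma isNeumannEigenvalue_iff {ξ ν : ℝ} :
    IsNeumannEigenvalue ξ (2 * ν + 1) ↔ deriv (weberFun ν) (-ξ) = 0 := by
  rw [← zero_sub]
  constructor
  · rintro ⟨u, hu, hnp, hu₀, hode⟩
    obtain ⟨c, hc⟩ := hu.exists_eqOn_const_mul (by fun_prop) (memB1p_weberFun ν ξ) hnp hode
      fun t _ ↦ hasDerivAt_deriv_weberFun_comp_sub ν ξ t
    have hright : HasDerivWithinAt (fun t ↦ weberFun ν (t - ξ)) (c * deriv u 0) (Ici 0) 0 :=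
      (((hu.1 0).hasDerivAt.const_mul c).hasDerivWithinAt).congr_of_mem hc self_mem_Ici
    rw [(uniqueDiffOn_Ici (0 : ℝ) 0 self_mem_Ici).eq_deriv _
      (hasDerivAt_weberFun_comp_sub ν ξ 0).hasDerivWithinAt hright, hu₀, mul_zero]
  · intro hzero
    refine ⟨_, memB1p_weberFun ν ξ, np_weberFun_ne_zero ν ξ, ?_,
      fun t _ ↦ hasDerivAt_deriv_weberFun_comp_sub ν ξ t⟩
    rwa [deriv_weberFun_comp_sub]

lemma MemB1p.mul_np_le_qRobin {v : ℝ → ℝ} (hv : MemB1p v) {ν ξ : ℝ}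
    (hpos : ∀ μ ≤ ν, 0 < hermiteFun μ (-ξ)) (hzero : deriv (weberFun ν) (-ξ) = 0) :
    (2 * ν + 1) * np v ≤ qRobin 0 ξ v := by
  have hpos_right {μ t : ℝ} (hμ : μ ≤ ν) (ht : 0 ≤ t) : 0 < hermiteFun μ (t - ξ) :=
    hermiteFun_pos_of_le (a := -ξ) (fun κ hκ ↦ hpos κ (hκ.trans hμ)) (by linarith)
  have hint := hv.integrableOn_energy_sub ξ (2 * ν + 1)
  have hlim := intervalIntegral_tendsto_integral_Ioi 0 hint tendsto_id
  rw [hv.integral_energy_sub] at hlim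
  refine sub_nonneg.1 (nonneg_of_tendsto_of_neg_le hlim
    ((hv.integrableOn_sub_sq_mul_sq ξ).const_mul (|ν| + 1)) ?_)
  filter_upwards [eventually_ge_atTop 0, eventually_ge_atTop (ξ + 1)] with t ht₀ htξ
  have htξ : 1 ≤ t - ξ := by linarith
  have hpicone := div_mul_sq_sub_le_integral (φ := fun t ↦ weberFun ν (t - ξ)) ht₀
    (fun s hs ↦ weberFun_pos_iff.2 (hpos_right le_rfl hs.1))
    (fun s _ ↦ hasDerivAt_weberFun_comp_sub ν ξ s)
    (fun s _ ↦ (hasDerivAt_deriv_weberFun ν (s - ξ)).comp_sub_const s ξ)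
    (fun s _ ↦ (hv.1 s).hasDerivAt)
    (by rw [integrableOn_Icc_iff_integrableOn_Ioc]; exact hint.mono_set Ioc_subset_Ioi_self)
  rw [zero_sub, hzero, zero_div, zero_mul, sub_zero] at hpicone
  refine le_trans ?_ hpicone
  have hslope : -(|ν| + (t - ξ)) ≤ deriv (weberFun ν) (t - ξ) / weberFun ν (t - ξ) := by
    rw [le_div_iff₀ (weberFun_pos_iff.2 (hpos_right le_rfl ht₀))]
    exact neg_mul_weberFun_le_deriv htξ (hpos_right le_rfl ht₀) (hpos_right (by linarith) ht₀)
  have hquad : |ν| + (t - ξ) ≤ (|ν| + 1) * (t - ξ) ^ 2 := by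
    nlinarith [abs_nonneg ν, mul_nonneg (abs_nonneg ν) (sub_nonneg.2 htξ)]
  nlinarith [sq_nonneg (v t)]

lemma le_lambda1N_of_forall {ξ c : ℝ} (h : ∀ u, MemB1p u → c * np u ≤ qRobin 0 ξ u) :
    c ≤ lambda1N ξ := by
  refine le_csInf ⟨_, _, memB1p_weberFun 0 0, np_weberFun_ne_zero 0 0, rfl⟩ ?_
  rintro _ ⟨u, hu, hnp, rfl⟩
  rw [le_div_iff₀ ((np_nonneg u).lt_of_ne' hnp)]
  exact h u hu

lemma qRobin_zero_weberFun {ν ξ : ℝ} (hzero : hermiteFun ν (-ξ) = 0) :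
    qRobin 0 ξ (fun t ↦ weberFun ν (t - ξ)) =
      (2 * ν + 1) * np fun t ↦ weberFun ν (t - ξ) := by
  rw [(memB1p_weberFun ν ξ).qRobin_zero_eq fun t _ ↦ hasDerivAt_deriv_weberFun_comp_sub ν ξ t,
    zero_sub, weberFun.eq_def ν (-ξ), hzero, mul_zero, zero_mul, sub_zero]

lemma lambda1N_le_of_hermiteFun_eq_zero {ν ξ : ℝ} (hzero : hermiteFun ν (-ξ) = 0) :
    lambda1N ξ ≤ 2 * ν + 1 :=
  lambda1N_le_of_qRobin_eq (memB1p_weberFun ν ξ) (np_weberFun_ne_zero ν ξ)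
    (qRobin_zero_weberFun hzero)

lemma lambda1D_le_of_hermiteFun_eq_zero {ν ξ : ℝ} (hzero : hermiteFun ν (-ξ) = 0) :
    lambda1D ξ ≤ 2 * ν + 1 :=
  lambda1D_le_of_qRobin_eq (memB1p_weberFun ν ξ) (by rw [zero_sub, weberFun, hzero, mul_zero])
    (np_weberFun_ne_zero ν ξ) (qRobin_zero_weberFun hzero)

lemma isClosed_setOf_isNeumannEigenvalue (ξ : ℝ) : IsClosed {lam | IsNeumannEigenvalue ξ lam} := by
  have hset : {lam | IsNeumannEigenvalue ξ lam} =
      {lam | deriv (weberFun ((lam - 1) / 2)) (-ξ) = 0} := by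
    ext lam
    rw [mem_ofPred_eq, mem_ofPred_eq, ← isNeumannEigenvalue_iff, mul_div_cancel₀ _ two_ne_zero,
      sub_add_cancel]
  rw [hset]
  exact isClosed_eq ((continuous_deriv_weberFun_left (-ξ)).comp
    ((continuous_sub_right 1).div_const 2)) continuous_const

lemma IsNeumannEigenvalue.le_lambda1N {ν ξ : ℝ} (h : IsNeumannEigenvalue ξ (2 * ν + 1))
    (hpos : ∀ μ ≤ ν, 0 < hermiteFun μ (-ξ)) : 2 * ν + 1 ≤ lambda1N ξ :=
  le_lambda1N_of_forall fun _ hu ↦ hu.mul_np_le_qRobin hpos (isNeumannEigenvalue_iff.1 h)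

lemma IsNeumannEigenvalue.le_of_lambda1N_lt {ν ξ lam : ℝ} (h : IsNeumannEigenvalue ξ lam)
    (hlam : lambda1N ξ < lam) (hpos : ∀ μ < ν, 0 < hermiteFun μ (-ξ)) : 2 * ν + 1 ≤ lam := by
  obtain ⟨κ, rfl⟩ : ∃ κ, lam = 2 * κ + 1 := ⟨(lam - 1) / 2, by ring⟩
  by_contra! hlt
  exact (h.le_lambda1N fun μ hμ ↦ hpos μ (by linarith)).not_gt hlam

/-- `λ₂^N(ξ) > λ₁^D(ξ)` for every `ξ`. -/
theorem secondNeumann_gt_firstDirichlet (ξ : ℝ) : lambda1D ξ < lambda2N ξ := by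
  obtain ⟨ν, hν, hzero, hpos⟩ := exists_least_order_hermiteFun_eq_zero (-ξ)
  have hpos_sub_one := hpos (ν - 1) (sub_one_lt ν)
  let S := {lam | IsNeumannEigenvalue ξ lam ∧ lambda1N ξ < lam}
  have hne : S.Nonempty := by
    obtain ⟨μ, hμ, hμ_zero⟩ := exists_gt_deriv_weberFun_eq_zero hν hzero hpos_sub_one
    exact ⟨2 * μ + 1, isNeumannEigenvalue_iff.2 hμ_zero,
      (lambda1N_le_of_hermiteFun_eq_zero hzero).trans_lt (by linarith)⟩
  have hle : ∀ lam ∈ S, 2 * ν + 1 ≤ lam := fun lam hlam ↦ hlam.1.le_of_lambda1N_lt hlam.2 hpos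
  have heigen : IsNeumannEigenvalue ξ (lambda2N ξ) :=
    closure_minimal (fun _ h ↦ h.1) (isClosed_setOf_isNeumannEigenvalue ξ)
      (csInf_mem_closure hne ⟨_, hle⟩)
  have hne_dirichlet : 2 * ν + 1 ≠ lambda2N ξ := fun h ↦
    (deriv_weberFun_pos_of_eq_zero hν hzero hpos_sub_one).ne'
      (isNeumannEigenvalue_iff.1 (h ▸ heigen))
  calc
    lambda1D ξ ≤ 2 * ν + 1 := lambda1D_le_of_hermiteFun_eq_zero hzero
    _ < lambda2N ξ := (le_csInf hne hle).lt_of_ne hne_dirichlet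
end
end

section
/- Let a, m, α > 0 with m ≤ 1. Then the function ξ ↦ μ₁(a,m,α;ξ) is strictly decreasing on ℝ; in particular it attains no minimum, and inf_{ξ∈ℝ} μ₁(a,m,α;ξ) = 1 - α. -/
open MeasureTheory Set Filter Topology

noncomputable section

/-!
In the variable `s = t - ξ` the form becomes the harmonic oscillator form on `ℝ` plus the
nonnegative density `(1/m - 1)(v'² + s²v²) + (1 + a)αv²` on `s ≤ c`, where `c = -ξ`, minus `α‖v‖²`.
It therefore increases with `c`, by at least `(1 + a)α ∫ v²` over the slab swept by the interface.

For a strict decrease of `μ₁` this gain must control `‖v‖²` uniformly; a minimiser is not available,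
since for `m < 1` the ground state has a kink at the interface while `MemB1` asks for
differentiability. Let `L` be the operator with the spectral parameter subtracted, so that its form
is nonnegative. A narrow Gaussian `g` centred at an interface inside the slab has zero derivative
there, hence satisfies the transmission condition, and `Lg ≤ -g` off the slab. Testing the form with
`w + tg`, where `w ≥ 0`, bounds `∫ gw` by the form of `w` and its mass in the slab; confinement by
`s²` turns this into a bound on `‖w‖²`, and a general `v` is reduced to `w = √(v² + ε²g²)`, `ε → 0`.

The oscillator bound `‖v‖² ≤ ∫ (v'² + s²v²)` gives `μ₁ ≥ 1 - α`, and its ground state `e^{-s²/2}`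
as trial function shows that this value is the limit as `ξ → ∞`.
-/

/-! ### The form domain -/

theorem memB1_iff_memLp {u : ℝ → ℝ} :
    MemB1 u ↔ Differentiable ℝ u ∧ MemLp u 2 ∧ MemLp (deriv u) 2 ∧ MemLp (fun s => s * u s) 2 := by
  refine and_congr_right fun hu => ?_
  have hu_cont := hu.continuous
  have hsu : Continuous fun s => s * u s := by fun_prop
  rw [memLp_two_iff_integrable_sq hu_cont.aestronglyMeasurable,
    memLp_two_iff_integrable_sq (stronglyMeasurable_deriv u).aestronglyMeasurable,
    memLp_two_iff_integrable_sq hsu.aestronglyMeasurable]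
  simp only [mul_pow]

namespace MemB1

variable {u v : ℝ → ℝ}

theorem differentiable (hu : MemB1 u) : Differentiable ℝ u := hu.1

theorem hasDerivAt (hu : MemB1 u) (s : ℝ) : HasDerivAt u (deriv u s) s :=
  (hu.differentiable s).hasDerivAt

theorem memLp (hu : MemB1 u) : MemLp u 2 := (memB1_iff_memLp.1 hu).2.1

theorem memLp_deriv (hu : MemB1 u) : MemLp (deriv u) 2 := (memB1_iff_memLp.1 hu).2.2.1

theorem memLp_id_mul (hu : MemB1 u) : MemLp (fun s => s * u s) 2 := (memB1_iff_memLp.1 hu).2.2.2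

theorem integrable_sq (hu : MemB1 u) : Integrable fun s => u s ^ 2 := hu.2.1

theorem integrable_mul (hu : MemB1 u) (hv : MemB1 v) : Integrable fun s => u s * v s :=
  hu.memLp.integrable_mul hv.memLp

theorem const_mul (hu : MemB1 u) (t : ℝ) : MemB1 fun s => t * u s := by
  refine memB1_iff_memLp.2
    ⟨hu.differentiable.const_mul t, hu.memLp.const_mul t, ?_, ?_⟩
  · have hderiv : deriv (fun s => t * u s) = fun s => t * deriv u s :=
      funext fun s => ((hu.hasDerivAt s).const_mul t).deriv
    exact hderiv ▸ hu.memLp_deriv.const_mul t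
  · simpa only [mul_left_comm] using hu.memLp_id_mul.const_mul t

theorem add (hu : MemB1 u) (hv : MemB1 v) : MemB1 fun s => u s + v s := by
  refine memB1_iff_memLp.2
    ⟨hu.differentiable.add hv.differentiable, hu.memLp.add hv.memLp, ?_, ?_⟩
  · have hderiv : deriv (fun s => u s + v s) = deriv u + deriv v :=
      funext fun s => ((hu.hasDerivAt s).add (hv.hasDerivAt s)).deriv
    exact hderiv ▸ hu.memLp_deriv.add hv.memLp_deriv
  · simp only [mul_add]
    exact hu.memLp_id_mul.add hv.memLp_id_mul

theorem comp_add_right (hu : MemB1 u) (h : ℝ) : MemB1 fun s => u (s + h) := by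
  have hshift := measurePreserving_add_right volume h
  have hmem : MemLp (fun s => u (s + h)) 2 := hu.memLp.comp_measurePreserving hshift
  refine memB1_iff_memLp.2
    ⟨hu.differentiable.comp (differentiable_id.add_const h), hmem, ?_, ?_⟩
  · have hderiv : deriv (fun s => u (s + h)) = fun s => deriv u (s + h) :=
      funext fun s => deriv_comp_add_const ..
    exact hderiv ▸ hu.memLp_deriv.comp_measurePreserving hshift
  · refine ((hu.memLp_id_mul.comp_measurePreserving hshift).sub (hmem.const_mul h)).ae_eq
      (ae_of_all _ fun s => ?_)
    simp only [Pi.sub_apply, Function.comp_apply]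
    ring

theorem integrable_deriv_mul_add (hu : MemB1 u) (hv : MemB1 v) :
    Integrable fun s => deriv u s * v s + u s * deriv v s :=
  (hu.memLp_deriv.integrable_mul hv.memLp).add (hu.memLp.integrable_mul hv.memLp_deriv)

theorem integral_deriv_mul_add (hu : MemB1 u) (hv : MemB1 v) :
    ∫ s, (deriv u s * v s + u s * deriv v s) = 0 :=
  integral_eq_zero_of_hasDerivAt_of_integrable
    (fun s => (hu.hasDerivAt s).mul (hv.hasDerivAt s))
    (hu.integrable_deriv_mul_add hv) (hu.integrable_mul hv)

theorem setIntegral_Iic_deriv_mul_add (hu : MemB1 u) (hv : MemB1 v) (c : ℝ) :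
    ∫ s in Iic c, (deriv u s * v s + u s * deriv v s) = u c * v c := by
  have hderiv : ∀ s ∈ Iic c, HasDerivAt (u * v) (deriv u s * v s + u s * deriv v s) s :=
    fun s _ => (hu.hasDerivAt s).mul (hv.hasDerivAt s)
  have hint : IntegrableOn (fun s => deriv u s * v s + u s * deriv v s) (Iic c) :=
    (hu.integrable_deriv_mul_add hv).integrableOn
  rw [integral_Iic_of_hasDerivAt_of_tendsto' hderiv hint
    (tendsto_zero_of_hasDerivAt_of_integrableOn_Iic hderiv hint
      (hu.integrable_mul hv).integrableOn), sub_zero, Pi.mul_apply]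

end MemB1

theorem nR_nonneg (u : ℝ → ℝ) : 0 ≤ nR u := integral_nonneg fun _ => sq_nonneg _

theorem nR_comp_add_right (u : ℝ → ℝ) (h : ℝ) : nR (fun s => u (s + h)) = nR u :=
  integral_add_right_eq_self (fun s => u s ^ 2) h

/-! ### The harmonic oscillator -/

/-- The polarised energy density `u'v' + s²uv` of the harmonic oscillator `-d²/ds² + s²`. -/
def oscDensity (u v : ℝ → ℝ) (s : ℝ) : ℝ := deriv u s * deriv v s + s ^ 2 * (u s * v s)

theorem MemB1.integrable_oscDensity {u v : ℝ → ℝ} (hu : MemB1 u) (hv : MemB1 v) :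
    Integrable (oscDensity u v) := by
  refine ((hu.memLp_deriv.integrable_mul hv.memLp_deriv).add
    (hu.memLp_id_mul.integrable_mul hv.memLp_id_mul)).congr (ae_of_all _ fun s => ?_)
  simp only [oscDensity, Pi.add_apply, Pi.mul_apply]
  ring

theorem oscDensity_self_nonneg (u : ℝ → ℝ) (s : ℝ) : 0 ≤ oscDensity u u s :=
  add_nonneg (mul_self_nonneg _) (mul_nonneg (sq_nonneg _) (mul_self_nonneg _))

theorem MemB1.nR_le_integral_oscDensity {u : ℝ → ℝ} (hu : MemB1 u) :
    nR u ≤ ∫ s, oscDensity u u s := by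
  have hcross : Integrable fun s => u s * u s + s * u s * deriv u s + s * u s * deriv u s :=
    ((hu.integrable_mul hu).add (hu.memLp_id_mul.integrable_mul hu.memLp_deriv)).add
      (hu.memLp_id_mul.integrable_mul hu.memLp_deriv)
  have hparts : ∫ s, (u s * u s + s * u s * deriv u s + s * u s * deriv u s) = 0 := by
    refine integral_eq_zero_of_hasDerivAt_of_integrable (f := fun s => s * u s * u s)
      (fun s => ?_) hcross (hu.memLp_id_mul.integrable_mul hu.memLp)
    refine (((hasDerivAt_id' s).mul (hu.hasDerivAt s)).mul (hu.hasDerivAt s)).congr_deriv ?_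
    simp only [Pi.mul_apply]
    ring
  have hosc := hu.integrable_oscDensity hu
  have hsum : (∫ s, oscDensity u u s) - nR u = ∫ s, (oscDensity u u s - u s ^ 2 +
      (u s * u s + s * u s * deriv u s + s * u s * deriv u s)) := by
    symm
    refine (integral_add (hosc.sub hu.integrable_sq) hcross).trans ?_
    rw [hparts, add_zero]
    exact integral_sub hosc hu.integrable_sq
  rw [← sub_nonneg, hsum]
  refine integral_nonneg fun s => (sq_nonneg (deriv u s + s * u s)).trans_eq ?_
  simp only [oscDensity]
  ring

theorem MemB1.sq_le_nR_add_integral_oscDensity {u : ℝ → ℝ} (hu : MemB1 u) (x : ℝ) :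
    u x ^ 2 ≤ nR u + ∫ s, oscDensity u u s := by
  have hright := hu.integrable_sq.add (hu.integrable_oscDensity hu)
  calc u x ^ 2 = ∫ s in Iic x, (deriv u s * u s + u s * deriv u s) := by
        rw [hu.setIntegral_Iic_deriv_mul_add hu, sq]
    _ ≤ ∫ s in Iic x, (u s ^ 2 + oscDensity u u s) := by
        refine integral_mono (hu.integrable_deriv_mul_add hu).integrableOn hright.integrableOn
          fun s => ?_
        simp only [oscDensity]
        nlinarith [sq_nonneg (u s - deriv u s), mul_self_nonneg (s * u s)]
    _ ≤ ∫ s, (u s ^ 2 + oscDensity u u s) :=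
        setIntegral_le_integral hright
          (ae_of_all _ fun s => add_nonneg (sq_nonneg _) (oscDensity_self_nonneg u s))
    _ = nR u + ∫ s, oscDensity u u s :=
        integral_add hu.integrable_sq (hu.integrable_oscDensity hu)

/-- The harmonic oscillator `-v'' + s²v` acting on `v`. -/
def oscOp (v : ℝ → ℝ) (s : ℝ) : ℝ := -deriv (deriv v) s + s ^ 2 * v s

/-! ### The interface form -/

/-- The indicator function of the half line `(-∞, c]` on which the second material sits. -/
def leftIndicator (c s : ℝ) : ℝ := (Iic c).indicator 1 s

theorem leftIndicator_mul (c : ℝ) (f : ℝ → ℝ) (s : ℝ) :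
    leftIndicator c s * f s = (Iic c).indicator f s := by
  by_cases hs : s ∈ Iic c <;> simp [leftIndicator, hs]

theorem leftIndicator_nonneg (c s : ℝ) : 0 ≤ leftIndicator c s :=
  indicator_nonneg (fun _ _ => zero_le_one) s

theorem leftIndicator_le_one (c s : ℝ) : leftIndicator c s ≤ 1 :=
  indicator_le_self' (fun _ _ => zero_le_one) s

theorem integrable_leftIndicator_mul {f : ℝ → ℝ} (hf : Integrable f) (c : ℝ) :
    Integrable fun s => leftIndicator c s * f s := by
  simpa only [leftIndicator_mul] using hf.indicator measurableSet_Iic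

theorem integral_leftIndicator_mul (c : ℝ) (f : ℝ → ℝ) :
    ∫ s, leftIndicator c s * f s = ∫ s in Iic c, f s := by
  simp only [leftIndicator_mul, integral_indicator measurableSet_Iic]

/-- The polarised density of the interface form in the variable `s = t - ξ`, with the interface at
`c = -ξ`: the oscillator energy has weight `1` on the right and `1 + k` on the left of `c`, and the
potential is `-ν` on the right and `β - ν` on the left. The paper's form has `k = 1/m - 1`,
`β = (1 + a)α` and `ν = α`; larger values of `ν` subtract a spectral parameter. -/
def interfaceDensity (k β ν c : ℝ) (u v : ℝ → ℝ) (s : ℝ) : ℝ :=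
  oscDensity u v s + leftIndicator c s * (k * oscDensity u v s + β * (u s * v s)) - ν * (u s * v s)

/-- The polarised interface form, see `interfaceDensity` for the parameters. -/
def interfaceForm (k β ν c : ℝ) (u v : ℝ → ℝ) : ℝ := ∫ s, interfaceDensity k β ν c u v s

/-- The differential expression of the interface operator, see `interfaceDensity` for the
parameters. -/
def interfaceOp (k β ν c : ℝ) (v : ℝ → ℝ) (s : ℝ) : ℝ :=
  oscOp v s + leftIndicator c s * (k * oscOp v s + β * v s) - ν * v s

section InterfaceForm

variable {k β ν c : ℝ} {u v : ℝ → ℝ}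

theorem MemB1.integrable_leftDensity (hu : MemB1 u) (hv : MemB1 v) (k β : ℝ) :
    Integrable fun s => k * oscDensity u v s + β * (u s * v s) :=
  ((hu.integrable_oscDensity hv).const_mul k).add ((hu.integrable_mul hv).const_mul β)

theorem MemB1.integrable_interfaceDensity (hu : MemB1 u) (hv : MemB1 v) (k β ν c : ℝ) :
    Integrable (interfaceDensity k β ν c u v) :=
  ((hu.integrable_oscDensity hv).add
    (integrable_leftIndicator_mul (hu.integrable_leftDensity hv k β) c)).sub
      ((hu.integrable_mul hv).const_mul ν)

theorem MemB1.interfaceForm_eq (hu : MemB1 u) (hv : MemB1 v) (k β ν c : ℝ) :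
    interfaceForm k β ν c u v = (∫ s, oscDensity u v s) +
      (∫ s in Iic c, (k * oscDensity u v s + β * (u s * v s))) - ν * ∫ s, u s * v s := by
  have hosc := hu.integrable_oscDensity hv
  have hleft := integrable_leftIndicator_mul (hu.integrable_leftDensity hv k β) c
  rw [← integral_leftIndicator_mul, ← integral_add hosc hleft, ← integral_const_mul]
  exact integral_sub (hosc.add hleft) ((hu.integrable_mul hv).const_mul ν)

theorem MemB1.interfaceForm_eq_add_nR (hv : MemB1 v) (k β ν ν' c : ℝ) :
    interfaceForm k β ν c v v = interfaceForm k β ν' c v v + (ν' - ν) * nR v := by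
  simp only [hv.interfaceForm_eq hv, nR, sq]
  ring

theorem MemB1.interfaceForm_add_const_mul (hu : MemB1 u) (hv : MemB1 v) (k β ν c t : ℝ) :
    interfaceForm k β ν c (fun s => u s + t * v s) (fun s => u s + t * v s) =
      interfaceForm k β ν c u u + 2 * t * interfaceForm k β ν c u v +
        t ^ 2 * interfaceForm k β ν c v v := by
  have huu := hu.integrable_interfaceDensity hu k β ν c
  have huv := (hu.integrable_interfaceDensity hv k β ν c).const_mul (2 * t)
  have hvv := (hv.integrable_interfaceDensity hv k β ν c).const_mul (t ^ 2)
  have hderiv (s : ℝ) : deriv (fun s => u s + t * v s) s = deriv u s + t * deriv v s :=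
    ((hu.hasDerivAt s).add ((hv.hasDerivAt s).const_mul t)).deriv
  simp only [interfaceForm, ← integral_const_mul]
  rw [← integral_add huu huv]
  refine Eq.trans (integral_congr_ae (ae_of_all _ fun s => ?_)) (integral_add (huu.add huv) hvv)
  simp only [interfaceDensity, oscDensity, hderiv]
  ring

theorem mul_interfaceOp (k β ν c : ℝ) (u v : ℝ → ℝ) (s : ℝ) :
    u s * interfaceOp k β ν c v s = interfaceDensity k β ν c u v s -
      (1 + k * leftIndicator c s) * (deriv u s * deriv v s + u s * deriv (deriv v) s) := by
  simp only [interfaceOp, interfaceDensity, oscOp, oscDensity]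
  ring

theorem MemB1.integrable_flux (hu : MemB1 u) (hv' : MemB1 (deriv v)) (k c : ℝ) :
    Integrable fun s => (1 + k * leftIndicator c s) *
      (deriv u s * deriv v s + u s * deriv (deriv v) s) := by
  have hderiv := hu.integrable_deriv_mul_add hv'
  simp only [one_add_mul, mul_assoc]
  exact hderiv.add ((integrable_leftIndicator_mul hderiv c).const_mul k)

theorem MemB1.integral_flux (hu : MemB1 u) (hv' : MemB1 (deriv v)) (k c : ℝ) :
    ∫ s, (1 + k * leftIndicator c s) * (deriv u s * deriv v s + u s * deriv (deriv v) s) =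
      k * (u c * deriv v c) := by
  have hderiv := hu.integrable_deriv_mul_add hv'
  simp only [one_add_mul, mul_assoc]
  rw [integral_add hderiv ((integrable_leftIndicator_mul hderiv c).const_mul k),
    integral_const_mul, integral_leftIndicator_mul, hu.integral_deriv_mul_add hv',
    hu.setIntegral_Iic_deriv_mul_add hv', zero_add]

theorem MemB1.integrable_mul_interfaceOp (hu : MemB1 u) (hv : MemB1 v) (hv' : MemB1 (deriv v))
    (k β ν c : ℝ) : Integrable fun s => u s * interfaceOp k β ν c v s := by
  simp only [mul_interfaceOp]
  exact (hu.integrable_interfaceDensity hv k β ν c).sub (hu.integrable_flux hv' k c)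

theorem MemB1.interfaceForm_eq_integral_mul_interfaceOp (hu : MemB1 u) (hv : MemB1 v)
    (hv' : MemB1 (deriv v)) (hc : deriv v c = 0) :
    interfaceForm k β ν c u v = ∫ s, u s * interfaceOp k β ν c v s := by
  simp only [mul_interfaceOp]
  rw [integral_sub (hu.integrable_interfaceDensity hv k β ν c) (hu.integrable_flux hv' k c),
    hu.integral_flux hv', hc, mul_zero, mul_zero, sub_zero, interfaceForm]

theorem MemB1.interfaceForm_const_mul (hv : MemB1 v) (k β ν c t : ℝ) :
    interfaceForm k β ν c (fun s => t * v s) (fun s => t * v s) =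
      t ^ 2 * interfaceForm k β ν c v v := by
  have hderiv (s : ℝ) : deriv (fun s => t * v s) s = t * deriv v s :=
    ((hv.hasDerivAt s).const_mul t).deriv
  rw [interfaceForm, interfaceForm, ← integral_const_mul]
  refine integral_congr_ae (ae_of_all _ fun s => ?_)
  simp only [interfaceDensity, oscDensity, hderiv]
  ring

theorem MemB1.integral_oscDensity_le (hk : 0 ≤ k) (hβ : 0 ≤ β) (hv : MemB1 v) (ν c : ℝ) :
    ∫ s, oscDensity v v s ≤ interfaceForm k β ν c v v + ν * nR v := by
  have hleft : 0 ≤ ∫ s in Iic c, (k * oscDensity v v s + β * (v s * v s)) :=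
    integral_nonneg fun s => add_nonneg (mul_nonneg hk (oscDensity_self_nonneg v s))
      (mul_nonneg hβ (mul_self_nonneg _))
  simp only [hv.interfaceForm_eq hv, nR, sq]
  linarith

theorem MemB1.nR_le_interfaceForm (hk : 0 ≤ k) (hβ : 0 ≤ β) (hv : MemB1 v) (ν c : ℝ) :
    (1 - ν) * nR v ≤ interfaceForm k β ν c v v := by
  linarith [hv.nR_le_integral_oscDensity, hv.integral_oscDensity_le hk hβ ν c]

theorem MemB1.interfaceForm_add_le (hk : 0 ≤ k) (hv : MemB1 v) {d : ℝ} (hcd : c ≤ d) :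
    interfaceForm k β ν c v v + β * ∫ s in Ioc c d, v s ^ 2 ≤ interfaceForm k β ν d v v := by
  have hleft := hv.integrable_leftDensity hv k β
  have hgain : β * ∫ s in Ioc c d, v s ^ 2 ≤
      ∫ s in Ioc c d, (k * oscDensity v v s + β * (v s * v s)) := by
    rw [← integral_const_mul]
    refine integral_mono (hv.integrable_sq.const_mul β).integrableOn hleft.integrableOn fun s => ?_
    rw [sq]
    exact le_add_of_nonneg_left (mul_nonneg hk (oscDensity_self_nonneg v s))
  rw [hv.interfaceForm_eq hv, hv.interfaceForm_eq hv, ← Iic_union_Ioc_eq_Iic hcd,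
    setIntegral_union (Iic_disjoint_Ioc le_rfl) measurableSet_Ioc hleft.integrableOn
      hleft.integrableOn]
  linarith

end InterfaceForm

/-! ### Smoothed absolute values -/

/-- The smoothed absolute value `√(v² + g²)` of `v`: for nowhere vanishing `g` it stays in the form
domain, which contains only differentiable functions and so misses `|v|`. -/
def regAbs (v g : ℝ → ℝ) (s : ℝ) : ℝ := √(v s ^ 2 + g s ^ 2)

section RegAbs

variable {v g : ℝ → ℝ}

theorem regAbs_nonneg (v g : ℝ → ℝ) (s : ℝ) : 0 ≤ regAbs v g s := Real.sqrt_nonneg _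

theorem regAbs_sq (v g : ℝ → ℝ) (s : ℝ) : regAbs v g s ^ 2 = v s ^ 2 + g s ^ 2 :=
  Real.sq_sqrt (by positivity)

theorem hasDerivAt_regAbs {s v' g' : ℝ} (hv : HasDerivAt v v' s) (hg : HasDerivAt g g' s)
    (hgs : g s ≠ 0) :
    HasDerivAt (regAbs v g) ((v s * v' + g s * g') / regAbs v g s) s := by
  have hpos : v s ^ 2 + g s ^ 2 ≠ 0 := by positivity
  refine (((hv.pow 2).add (hg.pow 2)).sqrt hpos).congr_deriv ?_
  simp only [Pi.add_apply, Pi.pow_apply, regAbs]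
  field_simp
  ring

theorem deriv_regAbs_sq_le {s : ℝ} (hv : DifferentiableAt ℝ v s) (hg : DifferentiableAt ℝ g s)
    (hgs : g s ≠ 0) : deriv (regAbs v g) s ^ 2 ≤ deriv v s ^ 2 + deriv g s ^ 2 := by
  rw [(hasDerivAt_regAbs hv.hasDerivAt hg.hasDerivAt hgs).deriv, div_pow, regAbs_sq,
    div_le_iff₀ (by positivity)]
  nlinarith [sq_nonneg (v s * deriv g s - g s * deriv v s)]

theorem memB1_regAbs (hv : MemB1 v) (hg : MemB1 g) (hg0 : ∀ s, g s ≠ 0) :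
    MemB1 (regAbs v g) := by
  have hdiff : Differentiable ℝ (regAbs v g) := fun s =>
    (hasDerivAt_regAbs (hv.hasDerivAt s) (hg.hasDerivAt s) (hg0 s)).differentiableAt
  refine ⟨hdiff, ?_, ?_, ?_⟩
  · simp only [regAbs_sq]
    exact hv.integrable_sq.add hg.integrable_sq
  · refine (hv.memLp_deriv.integrable_sq.add hg.memLp_deriv.integrable_sq).mono'
      ((measurable_deriv _).pow_const 2).aestronglyMeasurable (ae_of_all _ fun s => ?_)
    rw [Real.norm_of_nonneg (sq_nonneg _)]
    exact deriv_regAbs_sq_le (hv.differentiable s) (hg.differentiable s) (hg0 s)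
  · simp only [regAbs_sq, mul_add]
    exact hv.2.2.2.add hg.2.2.2

theorem oscDensity_regAbs_le {s : ℝ} (hv : DifferentiableAt ℝ v s) (hg : DifferentiableAt ℝ g s)
    (hgs : g s ≠ 0) :
    oscDensity (regAbs v g) (regAbs v g) s ≤ oscDensity v v s + oscDensity g g s := by
  simp only [oscDensity, ← sq, regAbs_sq]
  linarith [deriv_regAbs_sq_le hv hg hgs]

theorem setIntegral_regAbs_sq (hv : MemB1 v) (hg : MemB1 g) (S : Set ℝ) :
    ∫ s in S, regAbs v g s ^ 2 = (∫ s in S, v s ^ 2) + ∫ s in S, g s ^ 2 := by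
  simp only [regAbs_sq]
  exact integral_add hv.integrable_sq.integrableOn hg.integrable_sq.integrableOn

theorem nR_le_nR_regAbs (hv : MemB1 v) (hg : MemB1 g) : nR v ≤ nR (regAbs v g) := by
  simp only [nR, regAbs_sq]
  exact integral_mono hv.integrable_sq (hv.integrable_sq.add hg.integrable_sq)
    fun s => le_add_of_nonneg_right (sq_nonneg _)

theorem interfaceForm_regAbs_le {k : ℝ} (hk : 0 ≤ k) (hv : MemB1 v) (hg : MemB1 g)
    (hg0 : ∀ s, g s ≠ 0) (β ν c : ℝ) :
    interfaceForm k β ν c (regAbs v g) (regAbs v g) ≤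
      interfaceForm k β ν c v v + interfaceForm k β ν c g g := by
  have hw := memB1_regAbs hv hg hg0
  have hvv := hv.integrable_interfaceDensity hv k β ν c
  have hgg := hg.integrable_interfaceDensity hg k β ν c
  rw [interfaceForm, interfaceForm, interfaceForm, ← integral_add hvv hgg]
  refine integral_mono (hw.integrable_interfaceDensity hw k β ν c) (hvv.add hgg) fun s => ?_
  have hweight : 0 ≤ 1 + k * leftIndicator c s :=
    add_nonneg zero_le_one (mul_nonneg hk (leftIndicator_nonneg c s))
  have hosc := mul_le_mul_of_nonneg_left
    (oscDensity_regAbs_le (hv.differentiable s) (hg.differentiable s) (hg0 s)) hweight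
  simp only [interfaceDensity, ← sq, regAbs_sq]
  linarith

end RegAbs

/-! ### Gaussians -/

section Gaussian

open Polynomial

/-- The Gaussian of inverse variance `K` centred at `i`, normalised by its maximal value `1`. -/
def gaussian (K i s : ℝ) : ℝ := Real.exp (-(K / 2) * (s - i) ^ 2)

theorem gaussian_pos (K i s : ℝ) : 0 < gaussian K i s := Real.exp_pos _

theorem gaussian_le_one {K : ℝ} (hK : 0 ≤ K) (i s : ℝ) : gaussian K i s ≤ 1 :=
  Real.exp_le_one_iff.2 (mul_nonpos_of_nonpos_of_nonneg (by linarith) (sq_nonneg _))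

theorem hasDerivAt_eval_mul_gaussian (P : ℝ[X]) (K i s : ℝ) :
    HasDerivAt (fun s => P.eval s * gaussian K i s)
      ((derivative P - C K * (X - C i) * P).eval s * gaussian K i s) s := by
  have hexp : HasDerivAt (gaussian K i)
      (gaussian K i s * (-(K / 2) * (2 * (s - i)))) s := by
    refine ((((hasDerivAt_id' s).sub_const i).pow 2).const_mul (-(K / 2))).exp.congr_deriv ?_
    simp [gaussian]
  refine ((P.hasDerivAt s).mul hexp).congr_deriv ?_
  simp only [eval_sub, eval_mul, eval_C, eval_X]
  ring

theorem deriv_eval_mul_gaussian (P : ℝ[X]) (K i : ℝ) :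
    deriv (fun s => P.eval s * gaussian K i s) =
      fun s => (derivative P - C K * (X - C i) * P).eval s * gaussian K i s :=
  funext fun s => (hasDerivAt_eval_mul_gaussian P K i s).deriv

theorem integrable_eval_mul_gaussian {K : ℝ} (hK : 0 < K) (P : ℝ[X]) (i : ℝ) :
    Integrable fun s => P.eval s * gaussian K i s := by
  suffices hcentred : ∀ Q : ℝ[X], Integrable fun s => Q.eval s * Real.exp (-(K / 2) * s ^ 2) by
    have hshifted := (hcentred (P.comp (X + C i))).comp_sub_right i
    simpa [gaussian] using hshifted
  intro Q
  induction Q using Polynomial.induction_on' with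
  | add p q hp hq => simpa only [eval_add, add_mul] using! hp.add hq
  | monomial n a =>
    have hmonomial := integrable_rpow_mul_exp_neg_mul_sq (half_pos hK) (s := n)
      (by linarith [n.cast_nonneg (α := ℝ)])
    simpa only [eval_monomial, mul_assoc, Real.rpow_natCast] using hmonomial.const_mul a

theorem memLp_eval_mul_gaussian {K : ℝ} (hK : 0 < K) (P : ℝ[X]) (i : ℝ) :
    MemLp (fun s => P.eval s * gaussian K i s) 2 := by
  have hcont : Continuous fun s => P.eval s * gaussian K i s :=
    continuous_iff_continuousAt.2 fun s => (hasDerivAt_eval_mul_gaussian P K i s).continuousAt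
  rw [memLp_two_iff_integrable_sq hcont.aestronglyMeasurable]
  have hsq (s : ℝ) : (P.eval s * gaussian K i s) ^ 2 = (P ^ 2).eval s * gaussian (2 * K) i s := by
    rw [eval_pow, mul_pow, gaussian, gaussian, ← Real.exp_nat_mul]
    ring_nf
  simpa only [hsq] using integrable_eval_mul_gaussian (by positivity) (P ^ 2) i

theorem memB1_eval_mul_gaussian {K : ℝ} (hK : 0 < K) (P : ℝ[X]) (i : ℝ) :
    MemB1 fun s => P.eval s * gaussian K i s := by
  refine memB1_iff_memLp.2 ⟨fun s => (hasDerivAt_eval_mul_gaussian P K i s).differentiableAt,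
    memLp_eval_mul_gaussian hK P i, ?_, ?_⟩
  · exact deriv_eval_mul_gaussian P K i ▸ memLp_eval_mul_gaussian hK _ i
  · have hXP := memLp_eval_mul_gaussian hK (X * P) i
    simpa only [eval_mul, eval_X, mul_assoc] using hXP

theorem memB1_gaussian {K : ℝ} (hK : 0 < K) (i : ℝ) : MemB1 (gaussian K i) := by
  simpa using! memB1_eval_mul_gaussian hK 1 i

theorem deriv_gaussian (K i : ℝ) :
    deriv (gaussian K i) = fun s => (C (-K) * (X - C i)).eval s * gaussian K i s := by
  simpa using! deriv_eval_mul_gaussian 1 K i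

theorem memB1_deriv_gaussian {K : ℝ} (hK : 0 < K) (i : ℝ) : MemB1 (deriv (gaussian K i)) :=
  deriv_gaussian K i ▸ memB1_eval_mul_gaussian hK _ i

theorem deriv_gaussian_self (K i : ℝ) : deriv (gaussian K i) i = 0 := by
  simp [deriv_gaussian]

theorem oscOp_gaussian (K i s : ℝ) :
    oscOp (gaussian K i) s = (s ^ 2 + K - K ^ 2 * (s - i) ^ 2) * gaussian K i s := by
  rw [oscOp, deriv_gaussian, deriv_eval_mul_gaussian]
  simp only [map_neg, neg_mul, derivative_mul, derivative_C, zero_mul, derivative_sub,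
    derivative_X, sub_zero, mul_one, zero_add, mul_neg, sub_neg_eq_add, eval_add, eval_neg, eval_C,
    eval_mul, eval_sub, eval_X]
  ring

end Gaussian

/-! ### Barriers and the spectral gap -/

/-- A positive function of the form domain, smooth enough across the interface `c`, which is a
strict supersolution of the interface operator `L` off the set `S`: `L g ≤ -g` there, and
`L g ≤ C - g` on `S`. -/
structure IsBarrier (k β ν c C : ℝ) (S : Set ℝ) (g : ℝ → ℝ) : Prop where
  memB1 : MemB1 g
  memB1_deriv : MemB1 (deriv g)
  deriv_eq_zero : deriv g c = 0
  pos : ∀ s, 0 < g s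
  interfaceOp_add_le : ∀ s, interfaceOp k β ν c g s + g s ≤ S.indicator (fun _ => C) s

theorem exists_add_le_sq_sub_two_mul {δ : ℝ} (hδ : 0 < δ) {Z : ℝ} (hZ : 0 ≤ Z) :
    ∃ K, 2 ≤ K ∧ Z + K ≤ (K ^ 2 - 2) * δ := by
  have hx : (Z + 2) / δ * δ = Z + 2 := div_mul_cancel₀ _ hδ.ne'
  have hx0 : 0 ≤ (Z + 2) / δ := by positivity
  refine ⟨2 + (Z + 2) / δ, by linarith, ?_⟩
  nlinarith [mul_nonneg hx0 hZ]

theorem interfaceOp_gaussian (k β ν c K i s : ℝ) :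
    interfaceOp k β ν c (gaussian K i) s =
      ((1 + k * leftIndicator c s) * (s ^ 2 + K - K ^ 2 * (s - i) ^ 2) +
        leftIndicator c s * β - ν) * gaussian K i s := by
  rw [interfaceOp, oscOp_gaussian]
  ring

theorem interfaceOp_gaussian_add_le {k β K : ℝ} (hk : 0 ≤ k) (hβ : 0 ≤ β) (hK : 2 ≤ K)
    (ν c i s : ℝ) : interfaceOp k β ν c (gaussian K i) s + gaussian K i s ≤
      (1 + k) * (2 * i ^ 2 + K) + β + |ν| + 1 := by
  have hχ0 := leftIndicator_nonneg c s
  have hχ1 := leftIndicator_le_one c s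
  have hrecentre : s ^ 2 ≤ 2 * (i ^ 2 + (s - i) ^ 2) := by
    simpa using add_sq_le (a := i) (b := s - i)
  have hosc : s ^ 2 + K - K ^ 2 * (s - i) ^ 2 ≤ 2 * i ^ 2 + K := by
    have hK0 : 0 ≤ K ^ 2 - 2 := by nlinarith
    linarith [mul_nonneg hK0 (sq_nonneg (s - i))]
  have hweighted : (1 + k * leftIndicator c s) * (s ^ 2 + K - K ^ 2 * (s - i) ^ 2) ≤
      (1 + k) * (2 * i ^ 2 + K) :=
    (mul_le_mul_of_nonneg_left hosc (by positivity)).trans (mul_le_mul_of_nonneg_right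
      (by linarith [mul_le_of_le_one_right hk hχ1]) (by positivity))
  rw [interfaceOp_gaussian, ← add_one_mul]
  refine (mul_le_mul_of_nonneg_right ?_ (gaussian_pos K i s).le).trans
    (mul_le_of_le_one_right (by positivity) (gaussian_le_one (by linarith) i s))
  linarith [mul_le_of_le_one_left hβ hχ1, neg_le_abs ν]

theorem interfaceOp_gaussian_add_nonpos {k β ν K i s : ℝ} (hk : 0 ≤ k) (hβ : 0 ≤ β)
    (hs : 2 * i ^ 2 + (β + |ν| + 1) + K ≤ (K ^ 2 - 2) * (s - i) ^ 2) (c : ℝ) :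
    interfaceOp k β ν c (gaussian K i) s + gaussian K i s ≤ 0 := by
  have hrecentre : s ^ 2 ≤ 2 * (i ^ 2 + (s - i) ^ 2) := by
    simpa using add_sq_le (a := i) (b := s - i)
  have hosc : s ^ 2 + K - K ^ 2 * (s - i) ^ 2 ≤ -(β + |ν| + 1) := by linarith
  have hleft : k * leftIndicator c s * (s ^ 2 + K - K ^ 2 * (s - i) ^ 2) ≤ 0 :=
    mul_nonpos_of_nonneg_of_nonpos (mul_nonneg hk (leftIndicator_nonneg c s))
      (hosc.trans (neg_nonpos.2 (by positivity)))
  rw [interfaceOp_gaussian, ← add_one_mul]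
  refine mul_nonpos_of_nonpos_of_nonneg ?_ (gaussian_pos K i s).le
  linarith [mul_le_of_le_one_left hβ (leftIndicator_le_one c s), neg_le_abs ν]

theorem exists_isBarrier {k β c i d : ℝ} (hk : 0 ≤ k) (hβ : 0 ≤ β) (ν : ℝ) (hi : i ∈ Ioo c d) :
    ∃ C g, IsBarrier k β ν i C (Ioc c d) g := by
  obtain ⟨δ, hδ, hδc, hδd⟩ : ∃ δ, 0 < δ ∧ δ ≤ i - c ∧ δ ≤ d - i :=
    ⟨min (i - c) (d - i), lt_min (sub_pos.2 hi.1) (sub_pos.2 hi.2), min_le_left .., min_le_right ..⟩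
  obtain ⟨K, hK2, hK⟩ := exists_add_le_sq_sub_two_mul (pow_pos hδ 2)
    (Z := 2 * i ^ 2 + (β + |ν| + 1)) (by positivity)
  have hK0 : 0 < K := by linarith
  refine ⟨(1 + k) * (2 * i ^ 2 + K) + β + |ν| + 1, gaussian K i, memB1_gaussian hK0 i,
    memB1_deriv_gaussian hK0 i, deriv_gaussian_self K i, gaussian_pos K i, fun s => ?_⟩
  by_cases hs : s ∈ Ioc c d
  · rw [indicator_of_mem hs]
    exact interfaceOp_gaussian_add_le hk hβ hK2 ν i i s
  · rw [indicator_of_notMem hs]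
    have hdist : δ ^ 2 ≤ (s - i) ^ 2 := by
      rcases le_or_gt s c with hsc | hsc
      · nlinarith
      · have hsd : d < s := not_le.1 fun hsd => hs ⟨hsc, hsd⟩
        nlinarith
    exact interfaceOp_gaussian_add_nonpos hk hβ
      (hK.trans (mul_le_mul_of_nonneg_left hdist (by nlinarith))) i

theorem IsBarrier.two_mul_integral_mul_le {k β ν c C : ℝ} {S : Set ℝ} {g w : ℝ → ℝ}
    (hg : IsBarrier k β ν c C S g) (hS : MeasurableSet S) (hS' : volume S ≠ ⊤)
    (hnonneg : ∀ v, MemB1 v → 0 ≤ interfaceForm k β ν c v v)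
    (hw : MemB1 w) (hw0 : ∀ s, 0 ≤ w s) {t : ℝ} (ht : 0 ≤ t) :
    2 * t * ∫ s, g s * w s ≤ interfaceForm k β ν c w w + (∫ s in S, w s ^ 2) +
      t ^ 2 * (interfaceForm k β ν c g g + volume.real S * C ^ 2) := by
  have hgw := hg.memB1.integrable_mul hw
  have hconst : IntegrableOn (fun _ => C ^ 2 * t ^ 2) S := integrableOn_const hS'
  have hop := hw.integrable_mul_interfaceOp hg.memB1 hg.memB1_deriv k β ν c
  -- AM-GM on `S`: `2twC ≤ w² + t²C²`.
  have hpointwise (s : ℝ) : 2 * t * (w s * interfaceOp k β ν c g s) + 2 * t * (g s * w s) ≤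
      S.indicator (fun s => w s ^ 2 + C ^ 2 * t ^ 2) s := by
    have hbarrier := mul_le_mul_of_nonneg_left (hg.interfaceOp_add_le s)
      (mul_nonneg ht (hw0 s))
    by_cases hs : s ∈ S
    · rw [indicator_of_mem hs] at hbarrier ⊢
      nlinarith [sq_nonneg (w s - C * t)]
    · rw [indicator_of_notMem hs] at hbarrier ⊢
      linarith
  have hcross : 2 * t * interfaceForm k β ν c w g + 2 * t * ∫ s, g s * w s ≤
      (∫ s in S, w s ^ 2) + volume.real S * (C ^ 2 * t ^ 2) := by
    rw [hw.interfaceForm_eq_integral_mul_interfaceOp hg.memB1 hg.memB1_deriv hg.deriv_eq_zero,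
      ← integral_const_mul, ← integral_const_mul, ← integral_add (hop.const_mul _)
      (hgw.const_mul _), ← smul_eq_mul (volume.real S), ← setIntegral_const,
      ← integral_add hw.integrable_sq.integrableOn hconst, ← integral_indicator hS]
    exact integral_mono ((hop.const_mul _).add (hgw.const_mul _))
      ((hw.integrable_sq.integrableOn.add hconst).integrable_indicator hS) hpointwise
  have hvariation := hnonneg _ (hw.add (hg.memB1.const_mul t))
  rw [hw.interfaceForm_add_const_mul hg.memB1] at hvariation
  linarith

theorem exists_one_le_mul_add_mul_sq {g : ℝ → ℝ} (hg : Continuous g) (hpos : ∀ s, 0 < g s) {η : ℝ}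
    (hη : 0 < η) : ∃ B, 0 < B ∧ ∀ s, 1 ≤ B * g s + η * s ^ 2 := by
  obtain ⟨x, -, hx⟩ := (isCompact_Icc (a := -√η⁻¹) (b := √η⁻¹)).exists_isMinOn
    (nonempty_Icc.2 (neg_le_self (Real.sqrt_nonneg _))) hg.continuousOn
  refine ⟨(g x)⁻¹, inv_pos.2 (hpos x), fun s => ?_⟩
  by_cases hs : s ∈ Icc (-√η⁻¹) √η⁻¹
  · have hgs : 1 ≤ (g x)⁻¹ * g s := (one_le_inv_mul₀ (hpos x)).2 (hx hs)
    exact hgs.trans (le_add_of_nonneg_right (by positivity))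
  · have hs' : η⁻¹ < s ^ 2 := by
      rw [← sq_abs, ← Real.sqrt_lt' (by simpa using fun h => hs (by simp [h]))]
      exact not_le.1 fun h => hs (abs_le.1 h)
    have hηs : 1 ≤ η * s ^ 2 := ((inv_lt_iff_one_lt_mul₀' hη).1 hs').le
    exact hηs.trans (le_add_of_nonneg_left (mul_nonneg (inv_nonneg.2 (hpos x).le) (hpos s).le))

theorem nR_le_of_one_le {g w : ℝ → ℝ} {B η σ : ℝ} (hg : MemB1 g) (hw : MemB1 w)
    (hB : 0 ≤ B) (hη : 0 ≤ η) (hg0 : ∀ s, 0 ≤ g s) (hone : ∀ s, 1 ≤ B * g s + η * s ^ 2)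
    (hw0 : ∀ s, 0 ≤ w s) (hwσ : ∀ s, w s ≤ σ) :
    nR w ≤ B * (σ * ∫ s, g s * w s) + η * ∫ s, oscDensity w w s := by
  have hgw := ((hg.integrable_mul hw).const_mul σ).const_mul B
  have hosc := (hw.integrable_oscDensity hw).const_mul η
  simp only [← integral_const_mul]
  rw [← integral_add hgw hosc]
  refine integral_mono hw.integrable_sq (hgw.add hosc) fun s => ?_
  calc w s ^ 2 ≤ w s ^ 2 * (B * g s + η * s ^ 2) := le_mul_of_one_le_right (sq_nonneg _) (hone s)
    _ = B * (w s * (g s * w s)) + η * (s ^ 2 * (w s * w s)) := by ring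
    _ ≤ B * (σ * (g s * w s)) + η * oscDensity w w s := by
      gcongr
      · exact mul_nonneg (hg0 s) (hw0 s)
      · exact hwσ s
      · exact le_add_of_nonneg_left (mul_self_nonneg _)

theorem IsBarrier.exists_mul_integral_mul_le {k β ν c C : ℝ} {S : Set ℝ} {g : ℝ → ℝ}
    (hg : IsBarrier k β ν c C S g) (hS : MeasurableSet S) (hS' : volume S ≠ ⊤)
    (hnonneg : ∀ v, MemB1 v → 0 ≤ interfaceForm k β ν c v v) {ε : ℝ} (hε : 0 < ε) :
    ∃ Λ, 0 < Λ ∧ ∀ w, MemB1 w → (∀ s, 0 ≤ w s) → ∀ σ, 0 ≤ σ →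
      σ * ∫ s, g s * w s ≤
        Λ * (interfaceForm k β ν c w w + ∫ s in S, w s ^ 2) + ε * σ ^ 2 := by
  set D := interfaceForm k β ν c g g + volume.real S * C ^ 2
  have hD : 0 ≤ D := add_nonneg (hnonneg g hg.memB1) (by positivity)
  have hratio : D / (D + 1) ≤ 1 := div_le_one_of_le₀ (by linarith) (by linarith)
  refine ⟨(D + 1) / (4 * ε), by positivity, fun w hw hw0 σ hσ => ?_⟩
  have hbarrier := hg.two_mul_integral_mul_le hS hS' hnonneg hw hw0
    (t := 2 * ε / (D + 1) * σ) (by positivity)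
  calc σ * ∫ s, g s * w s
      = (D + 1) / (4 * ε) * (2 * (2 * ε / (D + 1) * σ) * ∫ s, g s * w s) := by field_simp; ring
    _ ≤ (D + 1) / (4 * ε) * (interfaceForm k β ν c w w + (∫ s in S, w s ^ 2) +
          (2 * ε / (D + 1) * σ) ^ 2 * D) := by gcongr
    _ = (D + 1) / (4 * ε) * (interfaceForm k β ν c w w + ∫ s in S, w s ^ 2) +
          D / (D + 1) * (ε * σ ^ 2) := by field_simp; ring
    _ ≤ _ := add_le_add le_rfl (mul_le_of_le_one_left (by positivity) hratio)

theorem IsBarrier.exists_nR_le_of_nonneg {k β ν c C : ℝ} {S : Set ℝ} {g : ℝ → ℝ}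
    (hk : 0 ≤ k) (hβ : 0 ≤ β) (hg : IsBarrier k β ν c C S g) (hS : MeasurableSet S)
    (hS' : volume S ≠ ⊤) (hnonneg : ∀ v, MemB1 v → 0 ≤ interfaceForm k β ν c v v) :
    ∃ Λ, 0 < Λ ∧ ∀ w, MemB1 w → (∀ s, 0 ≤ w s) →
      nR w ≤ Λ * (interfaceForm k β ν c w w + ∫ s in S, w s ^ 2) := by
  obtain ⟨η, hη, hην⟩ : ∃ η, 0 < η ∧ 4 * η * (1 + |ν|) = 1 :=
    ⟨1 / (4 * (1 + |ν|)), by positivity, by field_simp⟩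
  obtain ⟨B, hB, hone⟩ :=
    exists_one_le_mul_add_mul_sq hg.memB1.differentiable.continuous hg.pos hη
  obtain ⟨Λ, hΛ, hflux⟩ := hg.exists_mul_integral_mul_le hS hS' hnonneg (div_pos hη hB)
  refine ⟨2 * B * Λ + 4 * η, by positivity, fun w hw hw0 => ?_⟩
  set A := interfaceForm k β ν c w w + ∫ s in S, w s ^ 2
  set E := ∫ s, oscDensity w w s
  have hE0 : 0 ≤ E := integral_nonneg fun s => oscDensity_self_nonneg w s
  have hσ : √(nR w + E) ^ 2 = nR w + E := Real.sq_sqrt (add_nonneg (nR_nonneg w) hE0)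
  have henergy : E ≤ A + |ν| * nR w := by
    have hS0 : 0 ≤ ∫ s in S, w s ^ 2 := integral_nonneg fun s => sq_nonneg _
    linarith [hw.integral_oscDensity_le hk hβ ν c,
      mul_le_mul_of_nonneg_right (le_abs_self ν) (nR_nonneg w)]
  have hmass : nR w ≤ B * (√(nR w + E) * ∫ s, g s * w s) + η * E :=
    nR_le_of_one_le hg.memB1 hw hB.le hη.le (fun s => (hg.pos s).le) hone hw0
      fun s => Real.le_sqrt_of_sq_le (hw.sq_le_nR_add_integral_oscDensity s)
  have hfluxB : B * (√(nR w + E) * ∫ s, g s * w s) ≤ B * Λ * A + η * (nR w + E) := by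
    have hfluxσ := mul_le_mul_of_nonneg_left (hflux w hw hw0 _ (Real.sqrt_nonneg (nR w + E))) hB.le
    rw [hσ, mul_add, ← mul_assoc B Λ, ← mul_assoc B (η / B), mul_div_cancel₀ _ hB.ne'] at hfluxσ
    exact hfluxσ
  have hηE := mul_le_mul_of_nonneg_left henergy hη.le
  have hhalf : 4 * (η * (|ν| * nR w)) + 4 * (η * nR w) = nR w := by
    linear_combination nR w * hην
  linarith [mul_nonneg hη.le (nR_nonneg w)]

theorem IsBarrier.exists_nR_le {k β ν c C : ℝ} {S : Set ℝ} {g : ℝ → ℝ}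
    (hk : 0 ≤ k) (hβ : 0 ≤ β) (hg : IsBarrier k β ν c C S g) (hS : MeasurableSet S)
    (hS' : volume S ≠ ⊤) (hnonneg : ∀ v, MemB1 v → 0 ≤ interfaceForm k β ν c v v) :
    ∃ Λ, 0 < Λ ∧ ∀ v, MemB1 v →
      nR v ≤ Λ * (interfaceForm k β ν c v v + ∫ s in S, v s ^ 2) := by
  obtain ⟨Λ, hΛ, hbound⟩ := hg.exists_nR_le_of_nonneg hk hβ hS hS' hnonneg
  refine ⟨Λ, hΛ, fun v hv => ?_⟩
  set I := interfaceForm k β ν c v v + ∫ s in S, v s ^ 2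
  set G := interfaceForm k β ν c g g + ∫ s in S, g s ^ 2
  have hregularised : ∀ ε : ℝ, ε ≠ 0 → nR v ≤ Λ * (I + ε ^ 2 * G) := by
    intro ε hε
    have hεg := hg.memB1.const_mul ε
    have hεg0 : ∀ s, ε * g s ≠ 0 := fun s => mul_ne_zero hε (hg.pos s).ne'
    refine (nR_le_nR_regAbs hv hεg).trans ((hbound _ (memB1_regAbs hv hεg hεg0)
      (regAbs_nonneg v _)).trans (mul_le_mul_of_nonneg_left ?_ hΛ.le))
    have hform := interfaceForm_regAbs_le hk hv hεg hεg0 β ν c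
    rw [hg.memB1.interfaceForm_const_mul] at hform
    rw [setIntegral_regAbs_sq hv hεg]
    simp only [mul_pow, integral_const_mul]
    linarith
  have hlim : Tendsto (fun ε : ℝ => Λ * (I + ε ^ 2 * G)) (𝓝[≠] 0) (𝓝 (Λ * I)) := by
    have hcont : Continuous fun ε : ℝ => Λ * (I + ε ^ 2 * G) := by fun_prop
    simpa using (hcont.tendsto 0).mono_left nhdsWithin_le_nhds
  exact ge_of_tendsto hlim (eventually_mem_nhdsWithin.mono hregularised)

theorem exists_nR_le_interfaceForm {k β ν c d : ℝ} (hk : 0 ≤ k) (hβ : 0 < β) (hcd : c < d)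
    (hnonneg : ∀ v, MemB1 v → 0 ≤ interfaceForm k β ν c v v) :
    ∃ Λ, 0 < Λ ∧ ∀ v, MemB1 v → nR v ≤ Λ * interfaceForm k β ν d v v := by
  obtain ⟨i, hi⟩ := exists_between hcd
  have hmono {v : ℝ → ℝ} (hv : MemB1 v) {x y : ℝ} (hxy : x ≤ y) :
      interfaceForm k β ν x v v ≤ interfaceForm k β ν y v v :=
    (le_add_of_nonneg_right (mul_nonneg hβ.le (integral_nonneg fun s => sq_nonneg _))).trans
      (hv.interfaceForm_add_le hk hxy)
  obtain ⟨C, g, hg⟩ := exists_isBarrier hk hβ.le ν hi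
  obtain ⟨Λ, hΛ, hbound⟩ := hg.exists_nR_le hk hβ.le measurableSet_Ioc measure_Ioc_lt_top.ne
    fun v hv => (hnonneg v hv).trans (hmono hv hi.1.le)
  refine ⟨Λ * (1 + β⁻¹), by positivity, fun v hv => (hbound v hv).trans ?_⟩
  have hslab : ∫ s in Ioc c d, v s ^ 2 ≤ β⁻¹ * interfaceForm k β ν d v v := by
    rw [le_inv_mul_iff₀ hβ]
    linarith [hnonneg v hv, hv.interfaceForm_add_le (β := β) (ν := ν) hk hcd.le]
  rw [mul_assoc, one_add_mul]
  exact mul_le_mul_of_nonneg_left (add_le_add (hmono hv hi.2.le) hslab) hΛ.le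

/-! ### The ground state energy -/

theorem leftIndicator_neg (ξ s : ℝ) : leftIndicator (-ξ) s = leftIndicator 0 (s + ξ) := by
  simp only [leftIndicator, indicator_apply, mem_Iic, le_neg_iff_add_nonpos_right,
    Pi.one_apply]

theorem MemB1.QI_eq_interfaceForm {u : ℝ → ℝ} (hu : MemB1 u) (a m α ξ : ℝ) :
    QI a m α ξ u = interfaceForm (1 / m - 1) ((1 + a) * α) α (-ξ)
      (fun s => u (s + ξ)) (fun s => u (s + ξ)) := by
  set F : ℝ → ℝ := fun t => deriv u t ^ 2 + (t - ξ) ^ 2 * u t ^ 2 +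
    leftIndicator 0 t * ((1 / m - 1) * (deriv u t ^ 2 + (t - ξ) ^ 2 * u t ^ 2) +
      (1 + a) * α * u t ^ 2) - α * u t ^ 2 with hF
  have hdensity : interfaceDensity (1 / m - 1) ((1 + a) * α) α (-ξ)
      (fun s => u (s + ξ)) (fun s => u (s + ξ)) = fun s => F (s + ξ) := by
    funext s
    simp only [interfaceDensity, oscDensity, deriv_comp_add_const, leftIndicator_neg, hF,
      add_sub_cancel_right]
    ring
  have hshift := hu.comp_add_right ξ
  have hF_int : Integrable F := by
    have hint := hshift.integrable_interfaceDensity hshift (1 / m - 1) ((1 + a) * α) α (-ξ)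
    rw [hdensity] at hint
    simpa only [sub_add_cancel] using hint.comp_sub_right ξ
  rw [interfaceForm, hdensity, integral_add_right_eq_self F,
    ← integral_add_compl measurableSet_Ioi hF_int, compl_Ioi, integral_Iic_eq_integral_Iio (x := 0),
    QI]
  congr 1
  · refine setIntegral_congr_fun measurableSet_Ioi fun t ht => ?_
    have hχ : leftIndicator 0 t = 0 := indicator_of_notMem (notMem_Iic.2 ht) _
    simp only [hF, hχ]
    ring
  · refine setIntegral_congr_fun measurableSet_Iio fun t ht => ?_
    have hχ : leftIndicator 0 t = 1 := indicator_of_mem (mem_Iic.2 ht.le) _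
    simp only [hF, hχ]
    ring

theorem MemB1.nR_pos {u : ℝ → ℝ} (hu : MemB1 u) {x : ℝ} (hx : u x ≠ 0) : 0 < nR u :=
  integral_pos_of_integrable_nonneg_nonzero (hu.differentiable.continuous.pow 2) hu.integrable_sq
    (fun s => sq_nonneg (u s)) (pow_ne_zero 2 hx)

theorem le_mu1 {a m α ξ r : ℝ} (h : ∀ v, MemB1 v →
    0 ≤ interfaceForm (1 / m - 1) ((1 + a) * α) (r + α) (-ξ) v v) : r ≤ mu1 a m α ξ := by
  have hgauss := memB1_gaussian one_pos 0
  refine le_csInf ⟨_, gaussian 1 0, hgauss, (hgauss.nR_pos (gaussian_pos 1 0 0).ne').ne', rfl⟩ ?_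
  rintro _ ⟨u, hu, hu0, rfl⟩
  have hshift := hu.comp_add_right ξ
  have hform := h _ hshift
  rw [hshift.interfaceForm_eq_add_nR _ _ _ α, nR_comp_add_right, ← hu.QI_eq_interfaceForm] at hform
  rw [le_div_iff₀ ((nR_nonneg u).lt_of_ne' hu0)]
  linarith

section LowerBound

variable {a m α : ℝ}

theorem one_sub_le_mu1 (hm : 0 ≤ 1 / m - 1) (h : 0 ≤ (1 + a) * α) (ξ : ℝ) :
    1 - α ≤ mu1 a m α ξ := by
  refine le_mu1 fun v hv => ?_
  simpa using hv.nR_le_interfaceForm hm h 1 (-ξ)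

theorem interfaceForm_mu1_nonneg (hm : 0 ≤ 1 / m - 1) (h : 0 ≤ (1 + a) * α) (ξ : ℝ) {v : ℝ → ℝ}
    (hv : MemB1 v) :
    0 ≤ interfaceForm (1 / m - 1) ((1 + a) * α) (mu1 a m α ξ + α) (-ξ) v v := by
  have hlower {u : ℝ → ℝ} (hu : MemB1 u) (ν : ℝ) := hu.nR_le_interfaceForm hm h ν (-ξ)
  obtain hv0 | hv0 := eq_or_ne (nR v) 0
  · simpa [hv0] using hlower hv (mu1 a m α ξ + α)
  have hbdd : BddBelow {r | ∃ u, MemB1 u ∧ nR u ≠ 0 ∧ r = QI a m α ξ u / nR u} := by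
    refine ⟨1 - α, ?_⟩
    rintro _ ⟨u, hu, hu0, rfl⟩
    rw [le_div_iff₀ ((nR_nonneg u).lt_of_ne' hu0), hu.QI_eq_interfaceForm, ← nR_comp_add_right u ξ]
    exact hlower (hu.comp_add_right ξ) α
  have hshift := hv.comp_add_right (-ξ)
  have hnR := nR_comp_add_right v (-ξ)
  have hmu : mu1 a m α ξ ≤ QI a m α ξ (fun s => v (s + -ξ)) / nR (fun s => v (s + -ξ)) :=
    csInf_le hbdd ⟨_, hshift, hnR ▸ hv0, rfl⟩
  rw [hshift.QI_eq_interfaceForm, hnR, le_div_iff₀ ((nR_nonneg v).lt_of_ne' hv0)] at hmu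
  rw [hv.interfaceForm_eq_add_nR _ _ _ α]
  simp only [add_neg_cancel_right] at hmu
  linarith

theorem mu1_strictAnti (hm : 0 ≤ 1 / m - 1) (h : 0 < (1 + a) * α) :
    StrictAnti (mu1 a m α) := by
  intro ξ ξ' hξ
  obtain ⟨Λ, hΛ, hgap⟩ := exists_nR_le_interfaceForm hm h (neg_lt_neg hξ)
    fun v hv => interfaceForm_mu1_nonneg hm h.le ξ' hv
  have hle : mu1 a m α ξ' + Λ⁻¹ ≤ mu1 a m α ξ := le_mu1 fun v hv => by
    have hv_gap := (inv_mul_le_iff₀ hΛ).2 (hgap v hv)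
    rw [hv.interfaceForm_eq_add_nR _ _ _ (mu1 a m α ξ' + α)]
    linarith
  linarith [inv_pos.2 hΛ]

theorem integral_oscDensity_gaussian_one_zero :
    ∫ s, oscDensity (gaussian 1 0) (gaussian 1 0) s = nR (gaussian 1 0) := by
  have hg := memB1_gaussian one_pos 0
  have hground := hg.interfaceForm_eq_integral_mul_interfaceOp (k := 0) (β := 0) (ν := 0) hg
    (memB1_deriv_gaussian one_pos 0) (deriv_gaussian_self 1 0)
  rw [hg.interfaceForm_eq hg] at hground
  simpa [interfaceOp, oscOp_gaussian, nR, sq] using hground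

theorem tendsto_mu1_atTop (hm : 0 ≤ 1 / m - 1) (h : 0 ≤ (1 + a) * α) :
    Tendsto (mu1 a m α) atTop (𝓝 (1 - α)) := by
  have hg := memB1_gaussian one_pos 0
  have hnR : 0 < nR (gaussian 1 0) := hg.nR_pos (gaussian_pos 1 0 0).ne'
  have htail := tendsto_integral_Iic_zero (μ := volume) tendsto_neg_atTop_atBot
    (f := fun s => (1 / m - 1) * oscDensity (gaussian 1 0) (gaussian 1 0) s +
      (1 + a) * α * (gaussian 1 0 s * gaussian 1 0 s))
  have hupper := (htail.div_const (nR (gaussian 1 0))).const_add (1 - α)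
  rw [zero_div, add_zero] at hupper
  refine tendsto_of_tendsto_of_tendsto_of_le_of_le tendsto_const_nhds hupper
    (one_sub_le_mu1 hm h) fun ξ => ?_
  have htrial := interfaceForm_mu1_nonneg hm h ξ hg
  have hsq : ∫ s, gaussian 1 0 s * gaussian 1 0 s = nR (gaussian 1 0) := by simp only [nR, sq]
  rw [hg.interfaceForm_eq hg, integral_oscDensity_gaussian_one_zero, hsq] at htrial
  rw [← sub_le_iff_le_add', le_div_iff₀ hnR]
  linarith

end LowerBound

theorem mu1_strictAnti_of_m_le_one_general (a m α : ℝ) (hm0 : 0 < m) (hm : m ≤ 1)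
    (h : 0 < (1 + a) * α) :
    StrictAnti (fun ξ => mu1 a m α ξ) ∧
    (∀ ξ : ℝ, ∃ ξ' : ℝ, mu1 a m α ξ' < mu1 a m α ξ) ∧
    sInf (Set.range (fun ξ => mu1 a m α ξ)) = 1 - α := by
  have hk : 0 ≤ 1 / m - 1 := sub_nonneg.2 (one_le_one_div hm0 hm)
  have hanti := mu1_strictAnti hk h
  have hbdd : BddBelow (range (mu1 a m α)) :=
    ⟨1 - α, forall_mem_range.2 (one_sub_le_mu1 hk h.le)⟩
  exact ⟨hanti, fun ξ => ⟨ξ + 1, hanti (lt_add_one ξ)⟩, tendsto_nhds_unique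
    (tendsto_atTop_ciInf hanti.antitone hbdd) (tendsto_mu1_atTop hk h.le)⟩

/-- for `m ≤ 1`, `ξ ↦ μ₁(a,m,α;ξ)` is strictly decreasing, attains
no minimum, and its infimum is `1 - α`. -/
theorem mu1_strictAnti_of_m_le_one (a m α : ℝ) (ha : 0 < a) (hm0 : 0 < m) (hm : m ≤ 1)
    (hα : 0 < α) :
    StrictAnti (fun ξ => mu1 a m α ξ) ∧
    (∀ ξ : ℝ, ∃ ξ' : ℝ, mu1 a m α ξ' < mu1 a m α ξ) ∧
    sInf (Set.range (fun ξ => mu1 a m α ξ)) = 1 - α :=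
  mu1_strictAnti_of_m_le_one_general a m α hm0 hm (by positivity)
end
end
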